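/- arXiv:1103.3282 — 2 statements merged into one kernel-verified Lean document; each statement's English description precedes it below -/
import Mathlib

section
/- Let φ be a local symplectomorphism of (ℝ⁴,0) (φ(0)=0 and φ*ω₀=ω₀ near 0) that preserves the focus-focus foliation near the origin, i.e. the map q∘φ is constant on each connected component of each level set of q=(q₁,q₂) near 0. Then there exists a unique germ of diffeomorphism G:(ℝ²,0)→(ℝ²,0) such that q∘φ = G∘q near the origin; moreover G=(G₁,G₂) where G₂(c₁,c₂)=ε₂c₂ and (c₁,c₂)↦G₁(c₁,c₂)−ε₁c₁ is flat at the origin, for some signs ε₁,ε₂∈{+1,−1}. -/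
open Filter Topology Set MeasureTheory

noncomputable section

/-- ℝ⁴ with coordinates `(x₁, ξ₁, x₂, ξ₂) = (p 0, p 1, p 2, p 3)`. -/
abbrev E4 : Type := Fin 4 → ℝ

/-- ℝ². -/
abbrev E2 : Type := Fin 2 → ℝ

/-- The focus-focus quadratic form `q₁ = x₁ξ₁ + x₂ξ₂`. -/
def q1 (p : E4) : ℝ := p 0 * p 1 + p 2 * p 3

/-- The focus-focus quadratic form `q₂ = x₁ξ₂ − x₂ξ₁`. -/
def q2 (p : E4) : ℝ := p 0 * p 3 - p 2 * p 1

/-- The map `q = (q₁, q₂) : ℝ⁴ → ℝ²`. -/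
def qmap (p : E4) : E2 := ![q1 p, q2 p]

/-- The canonical symplectic form `ω₀ = dξ₁∧dx₁ + dξ₂∧dx₂` as a bilinear form on ℝ⁴. -/
def omega0 (u v : E4) : ℝ := u 1 * v 0 - u 0 * v 1 + u 3 * v 2 - u 2 * v 3

/-- A map is flat at a point if all its iterated derivatives (including the value) vanish. -/
def flatAt {E F : Type*} [NormedAddCommGroup E] [NormedSpace ℝ E]
    [NormedAddCommGroup F] [NormedSpace ℝ F] (f : E → F) (x : E) : Prop :=
  ∀ n : ℕ, iteratedFDeriv ℝ n f x = 0

section Taylor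
open Asymptotics

variable {E F : Type*} [NormedAddCommGroup E] [NormedSpace ℝ E]
  [NormedAddCommGroup F] [NormedSpace ℝ F] [CompleteSpace F]

/-- Taylor's formula with a big-O remainder. -/
theorem ff_taylor_bigO {f : E → F} (hf : ContDiffAt ℝ (⊤ : ℕ∞) f 0) (n : ℕ) :
    (fun y : E => f y - ∑ k ∈ Finset.range (n + 1),
      ((Nat.factorial k : ℕ) : ℝ)⁻¹ • (iteratedFDeriv ℝ k f 0 (fun _ ↦ y)))
      =O[𝓝 0] (fun y => ‖y‖ ^ (n + 1)) := by
  have hf1 : ContDiffAt ℝ ((n + 1 : ℕ) : ℕ∞) f 0 := hf.of_le (by exact_mod_cast le_top)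
  have hev : ∀ᶠ x in 𝓝 (0:E), ContDiffAt ℝ ((n + 1 : ℕ) : ℕ∞) f x :=
    hf1.eventually (by simp)
  have hcont : ContinuousAt (iteratedFDeriv ℝ (n + 1) f) 0 :=
    (hf.iteratedFDeriv_right (i := n + 1) (m := 0) (by
      rw [zero_add]; exact_mod_cast le_top)).continuousAt
  have hbd : ∀ᶠ x in 𝓝 (0:E), ‖iteratedFDeriv ℝ (n + 1) f x‖ <
      ‖iteratedFDeriv ℝ (n + 1) f 0‖ + 1 :=
    hcont.norm.eventually_lt continuousAt_const (by linarith)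
  obtain ⟨r, hr, hball⟩ := Metric.eventually_nhds_iff_ball.1 (hev.and hbd)
  set M := ‖iteratedFDeriv ℝ (n + 1) f 0‖ + 1
  have hM : 0 ≤ M := by positivity
  refine IsBigO.of_bound (‖((Nat.factorial n : ℕ) : ℝ)⁻¹‖ * M) ?_
  filter_upwards [Metric.ball_mem_nhds (0:E) hr] with y hy
  have hin : ∀ t ∈ Set.Icc (0:ℝ) 1, (0:E) + t • y ∈ Metric.ball (0:E) r := by
    intro t ht
    rw [zero_add, mem_ball_zero_iff, norm_smul, Real.norm_eq_abs, abs_of_nonneg ht.1]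
    rw [mem_ball_zero_iff] at hy
    nlinarith [ht.2, norm_nonneg y]
  have key := map_add_eq_sum_add_integral_iteratedFDeriv (f := f) (x := 0) (y := y) (n := n)
    (fun t ht => by exact_mod_cast (hball _ (hin t ht)).1)
  rw [zero_add] at key
  have e : f y - ∑ k ∈ Finset.range (n + 1),
      ((Nat.factorial k : ℕ) : ℝ)⁻¹ • (iteratedFDeriv ℝ k f 0 (fun _ ↦ y)) =
      ((Nat.factorial n : ℕ) : ℝ)⁻¹ • ∫ t in (0:ℝ)..1, (1 - t)^n •
        iteratedFDeriv ℝ (n + 1) f (0 + t • y) (fun _ ↦ y) := by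
    rw [sub_eq_iff_eq_add', ← key]
  rw [e, norm_smul, mul_assoc]
  refine mul_le_mul_of_nonneg_left ?_ (norm_nonneg _)
  have := intervalIntegral.norm_integral_le_of_norm_le_const (a := (0:ℝ)) (b := 1)
    (C := M * ‖y‖ ^ (n + 1)) (f := fun t : ℝ => (1 - t)^n •
        iteratedFDeriv ℝ (n + 1) f (0 + t • y) (fun _ ↦ y)) ?_
  · simpa using this
  · intro t ht
    rw [Set.uIoc_of_le zero_le_one] at ht
    have ht' : t ∈ Set.Icc (0:ℝ) 1 := ⟨ht.1.le, ht.2⟩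
    rw [norm_smul]
    have h1 : ‖(1 - t)^n‖ ≤ 1 := by
      rw [norm_pow, Real.norm_eq_abs, abs_of_nonneg (by linarith [ht.2])]
      exact pow_le_one₀ (by linarith [ht.2]) (by linarith [ht.1])
    have h2 : ‖iteratedFDeriv ℝ (n + 1) f (0 + t • y) (fun _ ↦ y)‖ ≤ M * ‖y‖ ^ (n + 1) := by
      refine (ContinuousMultilinearMap.le_opNorm _ _).trans ?_
      simp only [Finset.prod_const, Finset.card_univ, Fintype.card_fin]
      gcongr
      exact (hball _ (hin t ht')).2.le
    calc _ ≤ 1 * (M * ‖y‖ ^ (n + 1)) := by gcongr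
      _ = _ := one_mul _

theorem ff_pow_littleO {E : Type*} [NormedAddCommGroup E] {m k : ℕ} (h : k < m) :
    (fun y : E => ‖y‖ ^ m) =o[𝓝 0] (fun y => ‖y‖ ^ k) := by
  have := (isLittleO_pow_pow (𝕜 := ℝ) h).comp_tendsto (tendsto_norm_zero (E := E))
  exact this

theorem ff_littleO_coeff {f : E → F} (hf : ContDiffAt ℝ (⊤ : ℕ∞) f 0) (m : ℕ)
    (h : f =o[𝓝 0] (fun y => ‖y‖ ^ m)) :
    ∀ k ≤ m, ∀ y, iteratedFDeriv ℝ k f 0 (fun _ ↦ y) = 0 := by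
  induction m with
  | zero => 
    intro k hk y
    obtain rfl : k = 0 := by omega
    have h0 : Tendsto f (𝓝 0) (𝓝 0) := by simpa using h
    have := tendsto_nhds_unique hf.continuousAt h0
    simpa using this
  | succ m ih =>
    have hlow := ih (h.trans_isBigO (ff_pow_littleO (Nat.lt_succ_self m)).isBigO)
    intro k hk y
    rcases Nat.lt_or_ge k (m+1) with hk' | hk'
    · exact hlow k (by omega) y
    obtain rfl : k = m + 1 := by omega
    have hT := ff_taylor_bigO hf (m+1)
    have e : (fun y : E => f y - ∑ k ∈ Finset.range (m + 1 + 1),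
      ((Nat.factorial k : ℕ) : ℝ)⁻¹ • (iteratedFDeriv ℝ k f 0 (fun _ ↦ y))) =
      fun y : E => f y - ((Nat.factorial (m+1) : ℕ) : ℝ)⁻¹ • (iteratedFDeriv ℝ (m+1) f 0 (fun _ ↦ y)) := by
      funext z
      rw [Finset.sum_range_succ, Finset.sum_eq_zero, zero_add]
      intro j hj
      rw [hlow j (by have := Finset.mem_range.1 hj; omega), smul_zero]
    rw [e] at hT
    have h2 := h.sub (hT.trans_isLittleO (ff_pow_littleO (Nat.lt_succ_self (m+1))))
    simp only [sub_sub_cancel] at h2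
    -- homogeneous
    have h3 : (fun t : ℝ => t ^ (m+1) • (((Nat.factorial (m+1) : ℕ) : ℝ)⁻¹ •
        (iteratedFDeriv ℝ (m+1) f 0 (fun _ ↦ y)))) =o[𝓝 0] (fun t : ℝ => t ^ (m+1)) := by
      have ht : Tendsto (fun t : ℝ => t • y) (𝓝 0) (𝓝 0) := by
        have : Continuous (fun t : ℝ => t • y) := by fun_prop
        simpa using this.tendsto 0
      have h4 := h2.comp_tendsto ht
      have h5 : ((fun y : E => ‖y‖ ^ (m+1)) ∘ fun t : ℝ => t • y) =O[𝓝 0] (fun t : ℝ => t ^ (m+1)) := by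
        refine IsBigO.of_bound (‖y‖ ^ (m+1)) (Eventually.of_forall fun t => ?_)
        simp [norm_smul, mul_pow, mul_comm]
      refine (h4.trans_isBigO h5).congr_left (fun t => ?_)
      simp only [Function.comp_apply]
      rw [show (fun _ : Fin (m+1) => t • y) = fun i => (fun _ : Fin (m+1) => t) i • (fun _ => y) i from rfl,
        ContinuousMultilinearMap.map_smul_univ]
      simp only [Finset.prod_const, Finset.card_univ, Fintype.card_fin]
      rw [smul_comm]
    set v := (((Nat.factorial (m+1) : ℕ) : ℝ)⁻¹ •
        (iteratedFDeriv ℝ (m+1) f 0 (fun _ ↦ y))) with hv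
    have h6 : v = 0 := by
      by_contra hne
      have hpos : 0 < ‖v‖ := norm_pos_iff.2 hne
      have h7 := (h3.def (c := ‖v‖/2) (by positivity)).filter_mono (nhdsWithin_le_nhds (s := {0}ᶜ))
      obtain ⟨t, ht, ht0⟩ := (h7.and self_mem_nhdsWithin).exists
      rw [norm_smul] at ht
      have : 0 < ‖t ^ (m+1)‖ := norm_pos_iff.2 (pow_ne_zero _ ht0)
      nlinarith
    rw [hv, smul_eq_zero] at h6
    rcases h6 with h6 | h6
    · exact absurd h6 (by positivity)
    · exact h6

/-- A smooth function which is `o(‖y‖^m)` is `O(‖y‖^(m+1))`. -/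
theorem ff_littleO_bigO {f : E → F} (hf : ContDiffAt ℝ (⊤ : ℕ∞) f 0) (m : ℕ)
    (h : f =o[𝓝 0] (fun y => ‖y‖ ^ m)) : f =O[𝓝 0] (fun y => ‖y‖ ^ (m+1)) := by
  refine (ff_taylor_bigO hf m).congr_left (fun y => ?_)
  rw [Finset.sum_eq_zero, sub_zero]
  intro j hj
  rw [ff_littleO_coeff hf m h j (by have := Finset.mem_range.1 hj; omega), smul_zero]

end Taylor

section Flat
open Asymptotics

variable {E : Type} [NormedAddCommGroup E] [NormedSpace ℝ E]

theorem ff_fderiv_bigO {F : Type*} [NormedAddCommGroup F] [NormedSpace ℝ F]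
    {f : E → F} (hf : ContDiffAt ℝ (⊤ : ℕ∞) f 0)
    (h : ∀ m : ℕ, f =O[𝓝 0] (fun y => ‖y‖ ^ m)) (m : ℕ) :
    fderiv ℝ f =O[𝓝 0] (fun y => ‖y‖ ^ m) := by
  suffices H : ∀ m : ℕ, fderiv ℝ f =O[𝓝 0] (fun y => ‖y‖ ^ (m + 1)) from
    (H m).trans (ff_pow_littleO (Nat.lt_succ_self m)).isBigO
  clear m
  intro m
  have hd : ContDiffAt ℝ 1 (fderiv ℝ f) 0 := hf.fderiv_right (by norm_cast)
  obtain ⟨K, t, ht, hLip⟩ := hd.exists_lipschitzOnWith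
  have h1 : ContDiffAt ℝ 1 f 0 := hf.of_le (by exact_mod_cast le_top)
  have hdiff : ∀ᶠ x in 𝓝 (0:E), DifferentiableAt ℝ f x :=
    (h1.eventually (by simp)).mono fun x hx => hx.differentiableAt (by simp)
  obtain ⟨C, hC0, hC⟩ := (h (2 * (m + 1))).exists_pos
  have hCb := hC.bound
  obtain ⟨r, hr, hball⟩ := Metric.eventually_nhds_iff_ball.1 ((hdiff.and hCb).and ht)
  have h00 : fderiv ℝ f 0 = 0 := by
    have := (h 2)
    have h2 : HasFDerivAt f (0 : E →L[ℝ] F) 0 := by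
      refine IsBigO.hasFDerivAt (n := 2) ?_ (by norm_num)
      simpa using this
    exact h2.fderiv
  refine IsBigO.of_bound (C * 2 ^ (2 * (m+1)) + C + K) ?_
  filter_upwards [Metric.ball_mem_nhds (0:E) (show 0 < min (r/2) 1 by positivity)] with x hx
  rw [mem_ball_zero_iff, lt_min_iff] at hx
  by_cases hx0 : x = 0
  · subst hx0; simp [h00]
  have hxp : 0 < ‖x‖ := norm_pos_iff.2 hx0
  set η := ‖x‖ ^ (m+1) with hη
  have hηp : 0 < η := by positivity
  have hηx : η ≤ ‖x‖ := by
    rw [hη, pow_succ]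
    exact mul_le_of_le_one_left hxp.le (pow_le_one₀ hxp.le hx.2.le)
  rw [show ‖η‖ = η from by rw [Real.norm_eq_abs, abs_of_pos hηp]]
  refine ContinuousLinearMap.opNorm_le_of_unit_norm (by positivity) fun u hu => ?_
  have hsub : ∀ y ∈ Metric.closedBall x η, y ∈ Metric.ball (0:E) r ∧ ‖y‖ ≤ 2 * ‖x‖ := by
    intro y hy
    rw [mem_closedBall_iff_norm] at hy
    have : ‖y‖ ≤ ‖y - x‖ + ‖x‖ := by simpa using norm_add_le (y - x) x
    refine ⟨?_, by linarith⟩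
    rw [mem_ball_zero_iff]; linarith [hx.1]
  have hxm : x ∈ Metric.closedBall x η := Metric.mem_closedBall_self hηp.le
  have hym : x + η • u ∈ Metric.closedBall x η := by
    rw [mem_closedBall_iff_norm]; simp [norm_smul, hu, abs_of_pos hηp]
  have key := (convex_closedBall x η).norm_image_sub_le_of_norm_fderiv_le' (𝕜 := ℝ) (f := f)
    (φ := fderiv ℝ f x) (C := K * η)
    (fun y hy => (hball y (hsub y hy).1).1.1) (fun y hy => by
      have := hLip.dist_le_mul y (hball y (hsub y hy).1).2 x (hball x (hsub x hxm).1).2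
      rw [dist_eq_norm] at this
      refine this.trans ?_
      gcongr
      exact hy) hxm hym
  rw [add_sub_cancel_left, map_smul, norm_smul η u, hu, mul_one, Real.norm_eq_abs, abs_of_pos hηp] at key
  have b1 : ‖f (x + η • u)‖ ≤ C * 2 ^ (2 * (m+1)) * (η * η) := by
    refine (hball _ (hsub _ hym).1).1.2.trans ?_
    rw [norm_pow, norm_norm, mul_assoc]
    gcongr
    calc ‖x + η • u‖ ^ (2 * (m+1)) ≤ (2 * ‖x‖) ^ (2 * (m+1)) := by
          gcongr; exact (hsub _ hym).2
      _ = _ := by rw [mul_pow, hη]; ring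
  have b2 : ‖f x‖ ≤ C * (η * η) := by
    refine (hball _ (hsub _ hxm).1).1.2.trans (le_of_eq ?_)
    rw [norm_pow, norm_norm, hη]; ring
  have b3 : ‖η • fderiv ℝ f x u‖ ≤ ‖f (x + η • u)‖ + ‖f x‖ + K * η * η := by
    have e : η • fderiv ℝ f x u = f (x + η • u) - f x - (f (x + η • u) - f x - η • fderiv ℝ f x u) := by
      abel
    rw [e]
    refine (norm_sub_le _ _).trans ?_
    have := norm_sub_le (f (x + η • u)) (f x)
    linarith
  rw [norm_smul, Real.norm_eq_abs, abs_of_pos hηp] at b3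
  have : η * ‖fderiv ℝ f x u‖ ≤ η * ((C * 2 ^ (2 * (m+1)) + C + K) * η) := by
    nlinarith
  exact le_of_mul_le_mul_left this hηp

theorem ff_flat_aux (n : ℕ) : ∀ {F : Type} [NormedAddCommGroup F] [NormedSpace ℝ F]
    {f : E → F} (_ : ContDiffAt ℝ (⊤ : ℕ∞) f 0)
    (_ : ∀ m : ℕ, f =O[𝓝 0] (fun y => ‖y‖ ^ m)), iteratedFDeriv ℝ n f 0 = 0 := by
  induction n with
  | zero =>
    intro F _ _ f hf h
    have h0 : f 0 = 0 := by
      have := (h 1).trans_tendsto (by simpa using tendsto_norm_zero (E := E))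
      exact tendsto_nhds_unique hf.continuousAt this
    ext v
    simp [h0]
  | succ n ih =>
    intro F _ _ f hf h
    have := ih (f := fderiv ℝ f) (hf.fderiv_right (m := (⊤ : ℕ∞)) (by norm_cast)) (ff_fderiv_bigO hf h)
    rw [← norm_eq_zero, ← norm_iteratedFDeriv_fderiv, this, norm_zero]
end Flat

section Bootstrap
open Asymptotics

theorem ff_bootstrap (g S : ℂ → ℝ) (hg : ContDiffAt ℝ (⊤ : ℕ∞) g 0)
    (hS : ContDiffAt ℝ (⊤ : ℕ∞) S 0)
    (hg1 : ∀ᶠ c in 𝓝 (0:ℂ), |g c| ≤ (1/2) * ‖c‖)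
    (heq : ∀ᶠ c in 𝓝 (0:ℂ), c ≠ 0 →
      S c = - ((c + g c) * Complex.log ((c + g c) / c)).re - g c * Real.log ‖c‖) (n : ℕ) :
    g =O[𝓝 0] (fun c => ‖c‖ ^ n) := by
  have hg0 : g 0 = 0 := by simpa using hg1.self_of_nhds
  set R : ℂ → ℝ := fun c => ((c + g c) * Complex.log ((c + g c) / c)).re with hR
  have hR0 : R 0 = 0 := by simp [hR]
  have hRg : R =O[𝓝 0] g := by
    refine IsBigO.of_bound 3 ?_
    filter_upwards [hg1] with c hc
    by_cases h0 : c = 0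
    · subst h0; simp [hR0]
    have hcp : 0 < ‖c‖ := norm_pos_iff.2 h0
    have e : (c + g c) / c = 1 + (g c : ℂ) / c := by field_simp
    have hq : ‖(g c : ℂ) / c‖ ≤ 1/2 := by
      rw [norm_div, Complex.norm_real, Real.norm_eq_abs, div_le_iff₀ hcp]; exact hc
    have h1 : ‖Complex.log ((c + g c) / c)‖ ≤ 3/2 * ‖(g c : ℂ) / c‖ := by
      rw [e]; exact Complex.norm_log_one_add_half_le_self hq
    have h2 : ‖c + (g c : ℂ)‖ ≤ 3/2 * ‖c‖ := by
      refine (norm_add_le _ _).trans ?_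
      rw [Complex.norm_real, Real.norm_eq_abs]; linarith
    rw [Real.norm_eq_abs]
    calc |R c| ≤ ‖(c + g c) * Complex.log ((c + g c) / c)‖ := Complex.abs_re_le_norm _
      _ ≤ (3/2 * ‖c‖) * (3/2 * ‖(g c : ℂ) / c‖) := by rw [norm_mul]; gcongr
      _ = 9/4 * ‖g c‖ := by rw [norm_div, Complex.norm_real]; field_simp; ring
      _ ≤ 3 * ‖g c‖ := by nlinarith [norm_nonneg (g c)]
  have hlog : Tendsto (fun c : ℂ => ‖c‖ * Real.log ‖c‖) (𝓝 0) (𝓝 0) := by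
    have := (Real.continuous_mul_log.comp (continuous_norm (E := ℂ))).tendsto 0
    simpa [Function.comp_def] using this
  have hgl : ∀ m : ℕ, g =O[𝓝 0] (fun c => ‖c‖ ^ (m+1)) →
      (fun c => g c * Real.log ‖c‖) =o[𝓝 0] (fun c => ‖c‖ ^ m) := by
    intro m hm
    have h1 : (fun c => g c * Real.log ‖c‖) =O[𝓝 0] (fun c : ℂ => ‖c‖ ^ m * (‖c‖ * Real.log ‖c‖)) :=
      (hm.mul (isBigO_refl (fun c : ℂ => Real.log ‖c‖) _)).congr_right (fun c => by ring)
    refine h1.trans_isLittleO ?_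
    have h2 := (isBigO_refl (fun c : ℂ => ‖c‖ ^ m) (𝓝 0)).mul_isLittleO
      ((isLittleO_one_iff ℝ).2 hlog)
    simpa using h2
  have hg1' : g =O[𝓝 0] (fun c => ‖c‖ ^ (0+1)) :=
    IsBigO.of_bound (1/2) (by simpa using hg1)
  have hS0 : S 0 = 0 := by
    have t1 : Tendsto (fun c => - R c - g c * Real.log ‖c‖) (𝓝 0) (𝓝 0) := by
      have a1 : Tendsto R (𝓝 0) (𝓝 0) := by
        refine hRg.trans_tendsto ?_
        have := hg.continuousAt.tendsto
        rwa [hg0] at this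
      have a2 : Tendsto (fun c => g c * Real.log ‖c‖) (𝓝 0) (𝓝 0) := by
        have := hgl 0 hg1'
        simpa using this
      simpa using a1.neg.sub a2
    have t2 : Tendsto S (𝓝[≠] 0) (𝓝 0) := by
      refine (t1.mono_left nhdsWithin_le_nhds).congr' ?_
      filter_upwards [heq.filter_mono nhdsWithin_le_nhds, self_mem_nhdsWithin] with c h1 h2
      exact (h1 h2).symm
    exact tendsto_nhds_unique (hS.continuousAt.tendsto.mono_left nhdsWithin_le_nhds) t2
  have heq' : ∀ᶠ c in 𝓝 (0:ℂ), S c = - R c - g c * Real.log ‖c‖ := by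
    filter_upwards [heq] with c hc
    by_cases h0 : c = 0
    · subst h0; simp [hS0, hR0, hg0]
    · exact hc h0
  have hinv : Tendsto (fun c : ℂ => (Real.log ‖c‖)⁻¹) (𝓝 0) (𝓝 0) := by
    have h1 : ContinuousAt (fun c : ℂ => (Real.log ‖c‖)⁻¹) 0 := by
      rw [← continuousWithinAt_compl_self]
      unfold ContinuousWithinAt
      have : Tendsto (fun c : ℂ => Real.log ‖c‖) (𝓝[≠] 0) atBot :=
        Real.tendsto_log_nhdsGT_zero.comp (tendsto_norm_nhdsNE_zero (E := ℂ))
      have h3 := this.inv_tendsto_atBot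
      simp only [norm_zero, Real.log_zero, inv_zero]
      exact h3
    simpa using h1.tendsto
  have main : ∀ m : ℕ, g =O[𝓝 0] (fun c => ‖c‖ ^ (m+1)) := by
    intro m
    induction m with
    | zero => exact hg1'
    | succ m ih =>
      have hRb : R =O[𝓝 0] (fun c => ‖c‖ ^ (m+1)) := hRg.trans ih
      have hSo : S =o[𝓝 0] (fun c => ‖c‖ ^ m) := by
        have : (fun c => - R c - g c * Real.log ‖c‖) =o[𝓝 0] (fun c => ‖c‖ ^ m) :=
          (hRb.trans_isLittleO (ff_pow_littleO (Nat.lt_succ_self m))).neg_left.sub (hgl m ih)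
        exact this.congr' (heq'.mono fun c hc => hc.symm) EventuallyEq.rfl
      have hSb := ff_littleO_bigO hS m hSo
      have hglb : (fun c => g c * Real.log ‖c‖) =O[𝓝 0] (fun c => ‖c‖ ^ (m+1)) := by
        refine (hRb.neg_left.sub hSb).congr' (heq'.mono fun c hc => ?_) EventuallyEq.rfl
        simp only; rw [hc]; ring
      have hgo : g =o[𝓝 0] (fun c => ‖c‖ ^ (m+1)) := by
        have h2 := hglb.mul_isLittleO ((isLittleO_one_iff ℝ).2 hinv)
        simp only [mul_one] at h2
        refine h2.congr' ?_ EventuallyEq.rfl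
        filter_upwards [Metric.ball_mem_nhds (0:ℂ) one_pos] with c hc
        by_cases h0 : c = 0
        · subst h0; simp [hg0]
        have hl : Real.log ‖c‖ ≠ 0 := by
          have := Real.log_neg (norm_pos_iff.2 h0) (by simpa using hc)
          exact this.ne
        field_simp
      exact ff_littleO_bigO hg (m+1) hgo
  cases n with
  | zero => exact (main 0).trans (ff_pow_littleO (Nat.lt_succ_self 0)).isBigO
  | succ m => exact main m
end Bootstrap

section Existence

/-- existence of `G`. -/
theorem ff_exists_G (φ : ℂ × ℂ → ℂ × ℂ) (U : Set (ℂ × ℂ)) (hU : IsOpen U) (h0 : (0 : ℂ × ℂ) ∈ U)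
    (hsm : ContDiffOn ℝ (⊤ : ℕ∞) φ U)
    (hfol : ∀ S : Set (ℂ × ℂ), S ⊆ U → IsPreconnected S →
      (∀ x ∈ S, ∀ y ∈ S, x.1 * x.2 = y.1 * y.2) →
      ∀ x ∈ S, ∀ y ∈ S, (φ x).1 * (φ x).2 = (φ y).1 * (φ y).2) :
    ∃ G : ℂ → ℂ, (∀ᶠ c in 𝓝 (0 : ℂ), ContDiffAt ℝ (⊤ : ℕ∞) G c) ∧
      ∀ᶠ p in 𝓝 (0 : ℂ × ℂ), (φ p).1 * (φ p).2 = G (p.1 * p.2) := by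
  obtain ⟨r, hr, hball⟩ := Metric.isOpen_iff.1 hU 0 h0
  have hmem : ∀ p : ℂ × ℂ, ‖p.1‖ < r → ‖p.2‖ < r → p ∈ U := by
    intro p h1 h2
    apply hball
    rw [mem_ball_zero_iff, Prod.norm_def]
    exact max_lt h1 h2
  set δ : ℝ := r / 2 with hδ
  have hδp : 0 < δ := by positivity
  have hδc : (δ : ℂ) ≠ 0 := by exact_mod_cast hδp.ne'
  have hnδ : ‖(δ : ℂ)‖ = δ := by rw [Complex.norm_real, Real.norm_eq_abs, abs_of_pos hδp]
  set G : ℂ → ℂ := fun c => (φ ((δ : ℂ), c / δ)).1 * (φ ((δ : ℂ), c / δ)).2 with hG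
  have hφU : ∀ p ∈ U, ContDiffAt ℝ (⊤ : ℕ∞) φ p := fun p hp => hsm.contDiffAt (hU.mem_nhds hp)
  have hGsm : ∀ᶠ c in 𝓝 (0 : ℂ), ContDiffAt ℝ (⊤ : ℕ∞) G c := by
    have hcont : Continuous (fun c : ℂ => (((δ : ℂ), c / δ) : ℂ × ℂ)) := by fun_prop
    have hev : ∀ᶠ c in 𝓝 (0 : ℂ), (((δ : ℂ), c / δ) : ℂ × ℂ) ∈ U :=
      hcont.continuousAt.eventually (hU.mem_nhds
        (hmem _ (by simp only [hnδ]; linarith) (by simp [hr])))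
    filter_upwards [hev] with c hc
    have h1 : ContDiffAt ℝ (⊤ : ℕ∞) (fun c : ℂ => φ ((δ : ℂ), c / δ)) c := by
      have hA : ContDiffAt ℝ (⊤ : ℕ∞) (fun c : ℂ => (((δ : ℂ), c / δ) : ℂ × ℂ)) c := by
        fun_prop
      exact ContDiffAt.comp c (g := φ) (hφU _ hc) hA
    exact h1.fst.mul h1.snd
  refine ⟨G, hGsm, ?_⟩
  have key : ∀ p : ℂ × ℂ, ‖p.1‖ < δ → ‖p.2‖ < δ → p.1 ≠ 0 →
      (φ p).1 * (φ p).2 = G (p.1 * p.2) := by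
    intro p h1 h2 hne
    have hpos : 0 < ‖p.1‖ := norm_pos_iff.2 hne
    set σ : ℝ → ℂ := fun t => Complex.log p.1 + t * (Complex.log δ - Complex.log p.1) with hσ
    set γ : ℝ → ℂ × ℂ := fun t => (Complex.exp (σ t), p.1 * p.2 * Complex.exp (- σ t)) with hγ
    have hγc : Continuous γ := by fun_prop
    have hσre : ∀ t ∈ Icc (0:ℝ) 1, Real.log ‖p.1‖ ≤ (σ t).re ∧ (σ t).re ≤ Real.log δ := by
      intro t ht
      have hl : Real.log ‖p.1‖ ≤ Real.log δ := Real.log_le_log hpos h1.le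
      have : (σ t).re = Real.log ‖p.1‖ + t * (Real.log δ - Real.log ‖p.1‖) := by
        simp only [hσ, Complex.add_re, Complex.re_ofReal_mul, Complex.sub_re, Complex.log_re, hnδ]
      rw [this]
      constructor <;> nlinarith [ht.1, ht.2]
    have := hfol (γ '' Icc 0 1) ?_ (isPreconnected_Icc.image _ hγc.continuousOn) ?_
      (γ 0) ⟨0, by simp, rfl⟩ (γ 1) ⟨1, by simp, rfl⟩
    · have e0 : γ 0 = p := by
        ext <;> simp only [hγ, hσ]
        · simp [Complex.exp_log hne]
        · simp [Complex.exp_neg, Complex.exp_log hne]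
          field_simp
      have e1 : γ 1 = ((δ : ℂ), p.1 * p.2 / δ) := by
        ext <;> simp only [hγ, hσ]
        · simp [Complex.exp_log hδc]
        · simp [Complex.exp_neg, Complex.exp_log hδc, div_eq_mul_inv]
      rw [e0, e1] at this
      exact this
    · rintro _ ⟨t, ht, rfl⟩
      obtain ⟨a1, a2⟩ := hσre t ht
      refine hmem _ ?_ ?_
      · simp only [hγ]
        rw [Complex.norm_exp]
        calc Real.exp (σ t).re ≤ Real.exp (Real.log δ) := Real.exp_le_exp.2 a2
          _ = δ := Real.exp_log hδp
          _ < r := by rw [hδ]; linarith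
      · simp only [hγ]
        rw [norm_mul, norm_mul, Complex.norm_exp, Complex.neg_re]
        calc ‖p.1‖ * ‖p.2‖ * Real.exp (-(σ t).re) ≤ ‖p.1‖ * ‖p.2‖ * Real.exp (-Real.log ‖p.1‖) := by
              gcongr
          _ = ‖p.2‖ := by rw [Real.exp_neg, Real.exp_log hpos]; field_simp
          _ < r := by rw [hδ] at h2; linarith
    · have hc : ∀ t, (γ t).1 * (γ t).2 = p.1 * p.2 := by
        intro t
        simp only [hγ]
        rw [mul_left_comm, ← Complex.exp_add]; simp
      rintro _ ⟨t, -, rfl⟩ _ ⟨s, -, rfl⟩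
      rw [hc, hc]
  filter_upwards [Metric.ball_mem_nhds (0 : ℂ × ℂ) hδp] with p hp
  rw [mem_ball_zero_iff, Prod.norm_def, max_lt_iff] at hp
  by_cases hne : p.1 = 0
  · obtain ⟨a, w⟩ := p
    simp only at hne hp
    subst hne
    have hpU : ((0:ℂ), w) ∈ U := hmem _ (by simpa using hr) (by
      have := hp.2
      simp only
      rw [hδ] at this; linarith)
    have hι : Tendsto (fun t : ℂ => ((t, w) : ℂ × ℂ)) (𝓝 0) (𝓝 (0, w)) := by
      have : Continuous (fun t : ℂ => ((t, w) : ℂ × ℂ)) := by fun_prop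
      exact this.tendsto 0
    have t1 : Tendsto (fun t : ℂ => (φ (t, w)).1 * (φ (t, w)).2) (𝓝[≠] 0)
        (𝓝 ((φ (0, w)).1 * (φ (0, w)).2)) := by
      have hc : ContinuousAt (fun p => (φ p).1 * (φ p).2) (0, w) :=
        ((hφU _ hpU).continuousAt.fst).mul ((hφU _ hpU).continuousAt.snd)
      exact (hc.tendsto.comp hι).mono_left nhdsWithin_le_nhds
    have t2 : Tendsto (fun t : ℂ => G (t * w)) (𝓝[≠] 0) (𝓝 (G (0 * w))) := by
      have hm : Tendsto (fun t : ℂ => t * w) (𝓝 0) (𝓝 0) := by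
        have : Continuous (fun t : ℂ => t * w) := by fun_prop
        simpa using this.tendsto 0
      rw [zero_mul]
      exact (hGsm.self_of_nhds.continuousAt.tendsto.comp hm).mono_left nhdsWithin_le_nhds
    refine tendsto_nhds_unique t1 (t2.congr' ?_)
    filter_upwards [(Metric.ball_mem_nhds (0:ℂ) hδp |> fun h => nhdsWithin_le_nhds h),
      self_mem_nhdsWithin] with t ht ht0
    exact (key (t, w) (by simpa using ht) hp.2 ht0).symm
  · exact key p hp.1 hp.2 hne

end Existence

section Linear

/-- the symplectic form on `ℂ × ℂ` -/
def ffω (u v : ℂ × ℂ) : ℝ := (u.2 * v.1 - u.1 * v.2).re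

theorem ffω_nondeg (u : ℂ × ℂ) (h : ∀ v, ffω v u = 0) : u = 0 := by
  have h1 := h (0, 1)
  have h2 := h (0, Complex.I)
  have h3 := h (1, 0)
  have h4 := h (Complex.I, 0)
  simp [ffω] at h1 h2 h3 h4
  ext1 <;> apply Complex.ext <;> simp [*]

theorem ffω_sub (v x y : ℂ × ℂ) : ffω v (x - y) = ffω v x - ffω v y := by
  simp [ffω]; ring

/-- linear symplectic maps preserving the focus-focus pencil -/
theorem ff_linear (A : (ℂ × ℂ) →L[ℝ] (ℂ × ℂ)) (L : ℂ →L[ℝ] ℂ)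
    (hs : ∀ u v, ffω (A u) (A v) = ffω u v)
    (hq : ∀ p, (A p).1 * (A p).2 = L (p.1 * p.2)) :
    Function.Bijective A ∧
    ∃ ε1 ε2 : ℝ, (ε1 = 1 ∨ ε1 = -1) ∧ (ε2 = 1 ∨ ε2 = -1) ∧
      ∀ c : ℂ, L c = ⟨ε1 * c.re, ε2 * c.im⟩ := by
  have hinj : Function.Injective A := by
    rw [injective_iff_map_eq_zero]
    intro u hu
    refine ffω_nondeg u fun v => ?_
    rw [← hs, hu]; simp [ffω]
  have hsurj : Function.Surjective A :=
    (LinearMap.injective_iff_surjective (f := (A : (ℂ × ℂ) →ₗ[ℝ] (ℂ × ℂ)))).1 hinj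
  refine ⟨⟨hinj, hsurj⟩, ?_⟩
  have hpol : ∀ u v, (A u).1 * (A v).2 + (A v).1 * (A u).2 = L (u.1 * v.2 + v.1 * u.2) := by
    intro u v
    have h1 := hq (u + v)
    have h2 := hq u
    have h3 := hq v
    have e : (u + v).1 * (u + v).2 = u.1 * u.2 + v.1 * v.2 + (u.1 * v.2 + v.1 * u.2) := by
      simp; ring
    rw [e, map_add L, map_add L, ← h2, ← h3] at h1
    have h4 : (A u + A v).1 * (A u + A v).2 = (A u).1 * (A u).2 + (A v).1 * (A v).2
      + ((A u).1 * (A v).2 + (A v).1 * (A u).2) := by simp; ring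
    rw [map_add A, h4] at h1
    exact add_left_cancel h1
  have hL : ∀ c : ℂ, L c = c.re • L 1 + c.im • L Complex.I := by
    intro c
    conv_lhs => rw [← Complex.re_add_im c]
    rw [← map_smul, ← map_smul, ← map_add]
    simp
  set α := L 1 with hα
  set β := L Complex.I with hβ
  -- N1 A = A M1
  have hN1 : ∀ v, ((A v).1, -(A v).2) =
      A ((α.re - β.re * Complex.I) * v.1, -((α.re - β.re * Complex.I) * v.2)) := by
    intro v
    rw [← sub_eq_zero]
    refine ffω_nondeg _ fun u' => ?_
    obtain ⟨u, rfl⟩ := hsurj u'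
    rw [ffω_sub, hs, sub_eq_zero]
    have h := congrArg Complex.re (hpol u v)
    rw [hL] at h
    simp [ffω] at h ⊢
    linarith
  have hN2 : ∀ v, (-Complex.I * (A v).1, Complex.I * (A v).2) =
      A ((α.im - β.im * Complex.I) * v.1, -((α.im - β.im * Complex.I) * v.2)) := by
    intro v
    rw [← sub_eq_zero]
    refine ffω_nondeg _ fun u' => ?_
    obtain ⟨u, rfl⟩ := hsurj u'
    rw [ffω_sub, hs, sub_eq_zero]
    have h := congrArg Complex.im (hpol u v)
    rw [hL] at h
    simp [ffω] at h ⊢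
    linarith
  have s1 : ((α.re : ℂ) - β.re * Complex.I) ^ 2 = 1 := by
    set k := (α.re : ℂ) - β.re * Complex.I
    have h1 := hN1 (k * 1, -(k * 0))
    have h2 := hN1 (1, 0)
    simp only at h1 h2
    rw [← h2] at h1
    have h3 : A (1, 0) = A (k * (k * 1), -(k * -(k * 0))) := by
      rw [← h1]; ext <;> simp
    have := congrArg Prod.fst (hinj h3)
    simp at this
    rw [sq]; exact this.symm
  have s2 : ((α.im : ℂ) - β.im * Complex.I) ^ 2 = -1 := by
    set k := (α.im : ℂ) - β.im * Complex.I
    have h1 := hN2 (k * 1, -(k * 0))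
    have h2 := hN2 (1, 0)
    simp only at h1 h2
    rw [← h2] at h1
    have h3 : A (-(1, 0)) = A (k * (k * 1), -(k * -(k * 0))) := by
      rw [← h1, map_neg]; ext <;> simp [← mul_assoc]
    have := congrArg Prod.fst (hinj h3)
    simp at this
    rw [sq]; exact this.symm
  have r1 := congrArg Complex.re s1
  have i1 := congrArg Complex.im s1
  have r2 := congrArg Complex.re s2
  have i2 := congrArg Complex.im s2
  simp [sq] at r1 i1 r2 i2
  have b1 : β.re = 0 := by
    have : α.re * β.re = 0 := by linarith
    rcases mul_eq_zero.1 this with h | h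
    · rw [h] at r1; nlinarith [mul_self_nonneg β.re]
    · exact h
  have b2 : α.im = 0 := by
    have : α.im * β.im = 0 := by linarith
    rcases mul_eq_zero.1 this with h | h
    · exact h
    · rw [h] at r2; nlinarith [mul_self_nonneg α.im]
  refine ⟨α.re, β.im, ?_, ?_, ?_⟩
  · rw [b1] at r1; exact mul_self_eq_one_iff.1 (by linarith)
  · rw [b2] at r2; exact mul_self_eq_one_iff.1 (by linarith)
  · intro c
    rw [hL]
    apply Complex.ext <;> simp [b1, b2, mul_comm]

end Linear

section Primitive

/-- The one-form `φ^*λ - λ`, with `λ = Re (w da)`. -/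
def ffβ (φ : ℂ × ℂ → ℂ × ℂ) (p : ℂ × ℂ) : (ℂ × ℂ) →L[ℝ] ℝ :=
  Complex.reCLM.comp
    ((ContinuousLinearMap.mul ℝ ℂ (φ p).2).comp
        ((ContinuousLinearMap.fst ℝ ℂ ℂ).comp (fderiv ℝ φ p)) -
      (ContinuousLinearMap.mul ℝ ℂ p.2).comp (ContinuousLinearMap.fst ℝ ℂ ℂ))

theorem ffβ_apply (φ : ℂ × ℂ → ℂ × ℂ) (p v : ℂ × ℂ) :
    ffβ φ p v = ((φ p).2 * (fderiv ℝ φ p v).1 - p.2 * v.1).re := by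
  simp [ffβ]

theorem ff_primitive (φ : ℂ × ℂ → ℂ × ℂ) (U : Set (ℂ × ℂ)) (hU : IsOpen U) (hconv : Convex ℝ U)
    (hsm : ContDiffOn ℝ (⊤ : ℕ∞) φ U)
    (hsymp : ∀ p ∈ U, ∀ u v, ffω (fderiv ℝ φ p u) (fderiv ℝ φ p v) = ffω u v) :
    ∃ F : ℂ × ℂ → ℝ, ContDiffOn ℝ (⊤ : ℕ∞) F U ∧ ∀ p ∈ U, HasFDerivAt F (ffβ φ p) p := by
  have hφU : ∀ p ∈ U, ContDiffAt ℝ (⊤ : ℕ∞) φ p := fun p hp => hsm.contDiffAt (hU.mem_nhds hp)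
  have hdU : ∀ p ∈ U, ContDiffAt ℝ (⊤ : ℕ∞) (fderiv ℝ φ) p := fun p hp =>
    (hφU p hp).fderiv_right (m := (⊤ : ℕ∞)) (by norm_cast)
  have hβ : ContDiffOn ℝ (⊤ : ℕ∞) (ffβ φ) U := by
    intro p hp
    refine ContDiffAt.contDiffWithinAt ?_
    have h1 := hφU p hp
    have h2 := hdU p hp
    unfold ffβ
    have h3 : ContDiffAt ℝ (⊤ : ℕ∞) (fun p => ContinuousLinearMap.mul ℝ ℂ (φ p).2) p :=
      (ContinuousLinearMap.mul ℝ ℂ).contDiff.contDiffAt.comp p h1.snd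
    have h4 : ContDiffAt ℝ (⊤ : ℕ∞) (fun p : ℂ × ℂ => ContinuousLinearMap.mul ℝ ℂ p.2) p :=
      (ContinuousLinearMap.mul ℝ ℂ).contDiff.contDiffAt.comp p contDiffAt_snd
    exact contDiffAt_const.clm_comp ((h3.clm_comp (contDiffAt_const.clm_comp h2)).sub
      (h4.clm_comp contDiffAt_const))
  have hβd : DifferentiableOn ℝ (ffβ φ) U := hβ.differentiableOn (by simp)
  obtain ⟨F, hF⟩ := hconv.exists_forall_hasFDerivAt_of_fderiv_symmetric hU hβd (by
    intro a ha x y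
    have hd2 : HasFDerivAt (fderiv ℝ φ) (fderiv ℝ (fderiv ℝ φ) a) a :=
      ((hdU a ha).differentiableAt (by simp)).hasFDerivAt
    have hd1 : HasFDerivAt φ (fderiv ℝ φ a) a :=
      ((hφU a ha).differentiableAt (by simp)).hasFDerivAt
    have hsymm : fderiv ℝ (fderiv ℝ φ) a x y = fderiv ℝ (fderiv ℝ φ) a y x :=
      ((hφU a ha).isSymmSndFDerivAt (by
        rw [minSmoothness_of_isRCLikeNormedField]
        exact (WithTop.coe_le_coe.2 (le_top : (2 : ℕ∞) ≤ ⊤)))) x y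
    have hform : ∀ x y, fderiv ℝ (ffβ φ) a x y =
        ((fderiv ℝ φ a x).2 * (fderiv ℝ φ a y).1 + (φ a).2 * (fderiv ℝ (fderiv ℝ φ) a x y).1
          - x.2 * y.1).re := by
      intro x y
      have hb : HasFDerivAt (ffβ φ) (fderiv ℝ (ffβ φ) a) a :=
        (hβd.differentiableAt (hU.mem_nhds ha)).hasFDerivAt
      have e1 := hb.clm_apply (hasFDerivAt_const y a)
      have e2 : HasFDerivAt (fun p => ((φ p).2 * (fderiv ℝ φ p y).1 - p.2 * y.1).re) _ a :=
        Complex.reCLM.hasFDerivAt.comp a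
          ((hd1.snd.mul (hd2.clm_apply (hasFDerivAt_const y a)).fst).sub
            ((hasFDerivAt_snd (𝕜 := ℝ) (p := a)).mul (hasFDerivAt_const y.1 a)))
      have e3 : (fun p => (ffβ φ p) y) = 
          (fun p => ((φ p).2 * (fderiv ℝ φ p y).1 - p.2 * y.1).re) := by
        funext p; exact ffβ_apply φ p y
      rw [e3] at e1
      have := congrArg (fun T => T x) (e1.unique e2)
      simp at this
      rw [this]
      simp
      ring
    have hs := hsymp a ha x y
    rw [hform, hform, hsymm]
    simp [ffω] at hs ⊢
    linarith)
  refine ⟨F, ?_, hF⟩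
  rw [contDiffOn_infty_iff_fderiv_of_isOpen hU]
  exact ⟨fun p hp => (hF p hp).differentiableAt.differentiableWithinAt,
    hβ.congr fun p hp => (hF p hp).fderiv⟩

end Primitive

section Core

theorem ff_ratio {x a : ℂ} {k : ℝ} (ha : a ≠ 0) (h : ‖x - a‖ ≤ k * ‖a‖) : ‖x / a - 1‖ ≤ k := by
  have e : x / a - 1 = (x - a) / a := by field_simp
  rw [e, norm_div, div_le_iff₀ (norm_pos_iff.2 ha)]
  exact h

theorem ff_re_pos {x : ℂ} (h : ‖x - 1‖ < 1) : 0 < x.re := by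
  have h1 := (Complex.abs_re_le_norm (x - 1)).trans_lt h
  rw [abs_lt] at h1
  simp at h1
  linarith [h1.1]

theorem ff_log_mul {x y : ℂ} (hx : 0 < x.re) (hy : 0 < y.re) :
    Complex.log (x * y) = Complex.log x + Complex.log y := by
  have hx0 : x ≠ 0 := by rintro rfl; simp at hx
  have hy0 : y ≠ 0 := by rintro rfl; simp at hy
  have h1 := abs_lt.1 (Complex.abs_arg_lt_pi_div_two_iff.2 (Or.inl hx))
  have h2 := abs_lt.1 (Complex.abs_arg_lt_pi_div_two_iff.2 (Or.inl hy))
  exact Complex.log_mul hx0 hy0 ⟨by linarith [h1.1, h2.1], by linarith [h1.2, h2.2]⟩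

/-- The function which is constant along the leaves. -/
def ffΦ (φ : ℂ × ℂ → ℂ × ℂ) (F : ℂ × ℂ → ℝ) (g c σ : ℂ) : ℝ :=
  F (Complex.exp σ, c * Complex.exp (-σ))
    - (g * Complex.log ((φ (Complex.exp σ, c * Complex.exp (-σ))).1 * Complex.exp (-σ))).re
    - ((g - c) * σ).re

theorem ff_path (φ : ℂ × ℂ → ℂ × ℂ) (F : ℂ × ℂ → ℝ) (r : ℝ) (hr : 0 < r)
    (hφ : ∀ p ∈ Metric.ball (0 : ℂ × ℂ) r, DifferentiableAt ℝ φ p)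
    (hF : ∀ p ∈ Metric.ball (0 : ℂ × ℂ) r, HasFDerivAt F (ffβ φ p) p)
    (c g : ℂ) (hc : c ≠ 0)
    (hg : ∀ p ∈ Metric.ball (0 : ℂ × ℂ) r, p.1 * p.2 = c → (φ p).1 * (φ p).2 = g)
    (hρ : ∀ p ∈ Metric.ball (0 : ℂ × ℂ) r, p.1 ≠ 0 → p.2 ≠ 0 → 0 < ((φ p).1 / p.1).re)
    (σ0 σ1 : ℂ) (h0 : ‖Complex.exp σ0‖ < r) (h0' : ‖c * Complex.exp (-σ0)‖ < r)
    (h1 : ‖Complex.exp σ1‖ < r) (h1' : ‖c * Complex.exp (-σ1)‖ < r) :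
    ffΦ φ F g c σ0 = ffΦ φ F g c σ1 := by
  have hcp : 0 < ‖c‖ := norm_pos_iff.2 hc
  set v := σ1 - σ0 with hv
  set σ : ℝ → ℂ := fun t => σ0 + t * v with hσ
  have hσd : ∀ t, HasDerivAt σ v t := by
    intro t
    have h := ((Complex.ofRealCLM.hasDerivAt (x := t)).mul_const v).const_add σ0
    exact h.congr_deriv (by simp)
  set γ : ℝ → ℂ × ℂ := fun t => (Complex.exp (σ t), c * Complex.exp (-σ t)) with hγ
  have hγm : ∀ t ∈ Icc (0:ℝ) 1, γ t ∈ Metric.ball (0 : ℂ × ℂ) r := by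
    intro t ht
    have hre : (σ t).re = (1 - t) * σ0.re + t * σ1.re := by
      simp only [hσ, hv, Complex.add_re, Complex.re_ofReal_mul, Complex.sub_re]; ring
    have k1 : ∀ s : ℂ, ‖Complex.exp s‖ < r ↔ s.re < Real.log r := by
      intro s; rw [Complex.norm_exp, Real.lt_log_iff_exp_lt hr]
    have k2 : ∀ s : ℂ, ‖c * Complex.exp (-s)‖ < r ↔ Real.log ‖c‖ - s.re < Real.log r := by
      intro s
      rw [norm_mul, Complex.norm_exp, Real.lt_log_iff_exp_lt hr, sub_eq_add_neg, Real.exp_add,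
        Real.exp_log hcp, Complex.neg_re]
    rw [k1] at h0 h1
    rw [k2] at h0' h1'
    rw [mem_ball_zero_iff, Prod.norm_def, max_lt_iff]
    simp only [hγ]
    rw [k1, k2, hre]
    obtain ⟨t0, t1⟩ := ht
    rcases t0.eq_or_lt with rfl | t0
    · constructor <;> simp <;> linarith
    · constructor <;> nlinarith
  have hprod : ∀ t, (γ t).1 * (γ t).2 = c := by
    intro t; simp only [hγ]; rw [mul_left_comm, ← Complex.exp_add]; simp
  have hder : ∀ t ∈ Icc (0:ℝ) 1, HasDerivAt (fun t => ffΦ φ F g c (σ t)) 0 t := by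
    intro t ht
    have hm := hγm t ht
    have he : HasDerivAt (fun t => Complex.exp (σ t)) (Complex.exp (σ t) * v) t := (hσd t).cexp
    have hen : HasDerivAt (fun t => Complex.exp (-σ t)) (Complex.exp (-σ t) * -v) t :=
      (hσd t).neg.cexp
    have hγd : HasDerivAt γ (Complex.exp (σ t) * v, c * (Complex.exp (-σ t) * -v)) t :=
      he.prodMk (hen.const_mul c)
    set γ' : ℂ × ℂ := (Complex.exp (σ t) * v, c * (Complex.exp (-σ t) * -v)) with hγ'
    have hφd : HasDerivAt (fun t => φ (γ t)) (fderiv ℝ φ (γ t) γ') t :=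
      (hφ _ hm).hasFDerivAt.comp_hasDerivAt t hγd
    have hFd : HasDerivAt (fun t => F (γ t)) (ffβ φ (γ t) γ') t :=
      (hF _ hm).comp_hasDerivAt t hγd
    set D := fderiv ℝ φ (γ t) γ' with hD
    have hφ1 : HasDerivAt (fun t => (φ (γ t)).1) D.1 t :=
      (ContinuousLinearMap.fst ℝ ℂ ℂ).hasFDerivAt.comp_hasDerivAt t hφd
    have hρd : HasDerivAt (fun t => (φ (γ t)).1 * Complex.exp (-σ t))
      (D.1 * Complex.exp (-σ t) + (φ (γ t)).1 * (Complex.exp (-σ t) * -v)) t := hφ1.mul hen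
    have hne1 : (γ t).1 ≠ 0 := Complex.exp_ne_zero _
    have hne2 : (γ t).2 ≠ 0 := mul_ne_zero hc (Complex.exp_ne_zero _)
    have hpos : 0 < ((φ (γ t)).1 * Complex.exp (-σ t)).re := by
      have := hρ _ hm hne1 hne2
      rw [div_eq_mul_inv] at this
      rwa [Complex.exp_neg]
    have hlog := hρd.clog_real (Or.inl hpos)
    have hre := Complex.reCLM.hasFDerivAt.comp_hasDerivAt t (hlog.const_mul g)
    have hre2 := Complex.reCLM.hasFDerivAt.comp_hasDerivAt t ((hσd t).const_mul (g - c))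
    have tot := (hFd.sub hre).sub hre2
    refine tot.congr_deriv ?_
    have ha0 : (φ (γ t)).1 ≠ 0 := by
      intro h; rw [h] at hpos; simp at hpos
    have e1 : g * ((D.1 * Complex.exp (-σ t) + (φ (γ t)).1 * (Complex.exp (-σ t) * -v)) /
        ((φ (γ t)).1 * Complex.exp (-σ t))) = (φ (γ t)).2 * D.1 - g * v := by
      rw [← hg _ hm (hprod t)]
      have := Complex.exp_ne_zero (-σ t)
      field_simp
      ring
    have e2 : (γ t).2 * γ'.1 = c * v := by
      rw [← hprod t]; simp only [hγ', hγ]; ring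
    rw [ffβ_apply, e1, e2]
    simp only [Complex.reCLM_apply, Complex.sub_re, sub_mul]
    ring
  have hconst := constant_of_has_deriv_right_zero (a := (0:ℝ)) (b := 1)
    (f := fun t => ffΦ φ F g c (σ t))
    (fun t ht => (hder t ht).continuousAt.continuousWithinAt)
    (fun t ht => (hder t ⟨ht.1, ht.2.le⟩).hasDerivWithinAt) 1 (by simp)
  have s0 : σ 0 = σ0 := by simp [hσ]
  have s1 : σ 1 = σ1 := by simp [hσ, hv]
  simp only [s0, s1] at hconst
  exact hconst.symm

theorem ff_core (φ : ℂ × ℂ → ℂ × ℂ) (U : Set (ℂ × ℂ)) (hU : IsOpen U) (h0 : (0 : ℂ × ℂ) ∈ U)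
    (hsm : ContDiffOn ℝ (⊤ : ℕ∞) φ U) (hφ0 : φ 0 = 0)
    (hd : fderiv ℝ φ 0 = ContinuousLinearMap.id ℝ (ℂ × ℂ))
    (hsymp : ∀ p ∈ U, ∀ u v, ffω (fderiv ℝ φ p u) (fderiv ℝ φ p v) = ffω u v)
    (G : ℂ → ℂ) (hG : ContDiffAt ℝ (⊤ : ℕ∞) G 0)
    (hqG : ∀ᶠ p in 𝓝 (0 : ℂ × ℂ), (φ p).1 * (φ p).2 = G (p.1 * p.2)) :
    (∀ᶠ c in 𝓝 (0:ℂ), (G c).im = c.im) ∧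
    ∀ n : ℕ, (fun c => (G c).re - c.re) =O[𝓝 0] (fun c : ℂ => ‖c‖ ^ n) := by
  have hdiff : HasFDerivAt φ (ContinuousLinearMap.id ℝ (ℂ × ℂ)) 0 := by
    rw [← hd]
    exact ((hsm.contDiffAt (hU.mem_nhds h0)).differentiableAt (by simp)).hasFDerivAt
  have hsmall : ∀ᶠ p in 𝓝 (0 : ℂ × ℂ), ‖φ p - p‖ ≤ (1/10) * ‖p‖ := by
    have := hdiff.isLittleO.def (c := 1/10) (by norm_num)
    simpa [hφ0] using this
  have hG0 : G 0 = 0 := by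
    have := hqG.self_of_nhds
    simpa [hφ0] using this.symm
  obtain ⟨r, hr, hball⟩ := Metric.eventually_nhds_iff_ball.1
    ((hqG.and hsmall).and (hU.mem_nhds h0))
  have hBU : Metric.ball (0 : ℂ × ℂ) r ⊆ U := fun p hp => (hball p hp).2
  obtain ⟨F, hFsm, hF⟩ := ff_primitive φ (Metric.ball 0 r) Metric.isOpen_ball (convex_ball _ _)
    (hsm.mono hBU) (fun p hp => hsymp p (hBU hp))
  have hmem : ∀ a w : ℂ, ‖a‖ < r → ‖w‖ < r → (a, w) ∈ Metric.ball (0 : ℂ × ℂ) r := by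
    intro a w h1 h2
    rw [mem_ball_zero_iff, Prod.norm_def]
    exact max_lt h1 h2
  -- ratio estimates
  have ra : ∀ p ∈ Metric.ball (0 : ℂ × ℂ) r, p.1 ≠ 0 → ‖p.2‖ ≤ ‖p.1‖ →
      ‖(φ p).1 / p.1 - 1‖ ≤ 1/10 := by
    intro p hp h1 h2
    refine ff_ratio h1 ?_
    have h3 := (hball p hp).1.2
    rw [Prod.norm_def p, max_eq_left h2] at h3
    exact (norm_fst_le (φ p - p)).trans h3
  have rwt : ∀ p ∈ Metric.ball (0 : ℂ × ℂ) r, p.2 ≠ 0 → ‖p.1‖ ≤ ‖p.2‖ →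
      ‖(φ p).2 / p.2 - 1‖ ≤ 1/10 := by
    intro p hp h1 h2
    refine ff_ratio h1 ?_
    have h3 := (hball p hp).1.2
    rw [Prod.norm_def p, max_eq_right h2] at h3
    exact (norm_snd_le (φ p - p)).trans h3
  have rG : ∀ c : ℂ, c ≠ 0 → ‖c‖ < r ^ 2 → ‖G c / c - 1‖ ≤ 21/100 := by
    intro c hc hcr
    have hcp : 0 < ‖c‖ := norm_pos_iff.2 hc
    set s : ℝ := Real.sqrt ‖c‖ with hs
    have hsp : 0 < s := Real.sqrt_pos.2 hcp
    have hss : s * s = ‖c‖ := Real.mul_self_sqrt hcp.le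
    have hsr : s < r := by nlinarith
    have hsc : (s : ℂ) ≠ 0 := by exact_mod_cast hsp.ne'
    have n1 : ‖(s : ℂ)‖ = s := by rw [Complex.norm_real, Real.norm_eq_abs, abs_of_pos hsp]
    have n2 : ‖c / s‖ = s := by rw [norm_div, n1, ← hss]; field_simp
    have hm := hmem (s : ℂ) (c / s) (by rw [n1]; exact hsr) (by rw [n2]; exact hsr)
    have a1 := ra _ hm hsc (by simp only; rw [n1, n2])
    have a2 := rwt _ hm (div_ne_zero hc hsc) (by simp only; rw [n1, n2])
    have a3 := (hball _ hm).1.1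
    simp only at a1 a2 a3
    rw [mul_div_cancel₀ _ hsc] at a3
    set X := (φ ((s : ℂ), c / s)).1 / s with hX
    set Y := (φ ((s : ℂ), c / s)).2 / (c / s) with hY
    have e : G c / c = X * Y := by
      rw [← a3, hX, hY]; field_simp
    have e2 : X * Y - 1 = (X - 1) * (Y - 1) + (X - 1) + (Y - 1) := by ring
    rw [e, e2]
    have b1 := norm_add_le ((X - 1) * (Y - 1) + (X - 1)) (Y - 1)
    have b2 := norm_add_le ((X - 1) * (Y - 1)) (X - 1)
    rw [norm_mul] at b2
    nlinarith [norm_nonneg (X - 1), norm_nonneg (Y - 1)]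
  have hρ : ∀ p ∈ Metric.ball (0 : ℂ × ℂ) r, p.1 ≠ 0 → p.2 ≠ 0 → 0 < ((φ p).1 / p.1).re := by
    intro p hp h1 h2
    refine ff_re_pos ?_
    rcases le_total ‖p.2‖ ‖p.1‖ with h | h
    · exact (ra p hp h1 h).trans_lt (by norm_num)
    · have a2 := rwt p hp h2 h
      have hp' := hp
      rw [mem_ball_zero_iff, Prod.norm_def, max_lt_iff] at hp'
      have a1 := rG (p.1 * p.2) (mul_ne_zero h1 h2) (by
        rw [norm_mul, sq]; exact mul_lt_mul'' hp'.1 hp'.2 (norm_nonneg _) (norm_nonneg _))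
      rw [← (hball p hp).1.1] at a1
      set X := (φ p).1 / p.1 with hX
      set Y := (φ p).2 / p.2 with hY
      have e : (φ p).1 * (φ p).2 / (p.1 * p.2) = X * Y := by rw [hX, hY]; field_simp
      rw [e] at a1
      have e2 : (X - 1) * Y = (X * Y - 1) - (Y - 1) := by ring
      have b1 : ‖X - 1‖ * ‖Y‖ ≤ 31/100 := by
        rw [← norm_mul, e2]
        refine (norm_sub_le _ _).trans ?_
        linarith
      have b2 : 9/10 ≤ ‖Y‖ := by
        have := norm_sub_norm_le (1:ℂ) (1 - Y)
        rw [norm_one, norm_sub_rev 1 Y, sub_sub_cancel] at this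
        linarith
      nlinarith [norm_nonneg (X - 1)]
  have path : ∀ c : ℂ, c ≠ 0 → ∀ σ0 σ1 : ℂ, ‖Complex.exp σ0‖ < r → ‖c * Complex.exp (-σ0)‖ < r →
      ‖Complex.exp σ1‖ < r → ‖c * Complex.exp (-σ1)‖ < r →
      ffΦ φ F (G c) c σ0 = ffΦ φ F (G c) c σ1 := by
    intro c hc σ0 σ1
    refine ff_path φ F r hr (fun p hp => ?_) hF c (G c) hc (fun p hp hpc => ?_) hρ σ0 σ1
    · exact (hsm.contDiffAt (hU.mem_nhds (hBU hp))).differentiableAt (by simp)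
    · rw [(hball p hp).1.1, hpc]
  set δ : ℝ := r / 2 with hδ
  have hδp : 0 < δ := by positivity
  have hδr : δ < r := by rw [hδ]; linarith
  have hδc : (δ : ℂ) ≠ 0 := by exact_mod_cast hδp.ne'
  have hnδ : ‖(δ : ℂ)‖ = δ := by rw [Complex.norm_real, Real.norm_eq_abs, abs_of_pos hδp]
  have hexpδ : Complex.exp (Complex.log δ) = δ := Complex.exp_log hδc
  have hnc : ∀ c : ℂ, ‖c‖ < δ ^ 2 → ‖c / δ‖ < r := by
    intro c hc
    rw [norm_div, hnδ, div_lt_iff₀ hδp]; nlinarith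
  -- imaginary part
  have him : ∀ c : ℂ, ‖c‖ < δ ^ 2 → (G c).im = c.im := by
    intro c hc
    by_cases hc0 : c = 0
    · subst hc0; rw [hG0]
    have hA1 : ‖Complex.exp (Complex.log δ)‖ < r := by rw [hexpδ, hnδ]; exact hδr
    have hA2 : ‖c * Complex.exp (-Complex.log δ)‖ < r := by
      rw [Complex.exp_neg, hexpδ, ← div_eq_mul_inv]; exact hnc c hc
    have p1 : Complex.exp (Complex.log δ + 2 * Real.pi * Complex.I) = Complex.exp (Complex.log δ) := by
      rw [Complex.exp_add, Complex.exp_two_pi_mul_I, mul_one]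
    have p2 : Complex.exp (-(Complex.log δ + 2 * Real.pi * Complex.I)) = Complex.exp (-Complex.log δ) := by
      rw [Complex.exp_neg, p1, Complex.exp_neg]
    have h := path c hc0 (Complex.log δ) (Complex.log δ + 2 * Real.pi * Complex.I) hA1 hA2
      (by rw [p1]; exact hA1) (by rw [p2]; exact hA2)
    unfold ffΦ at h
    rw [p1, p2, mul_add, Complex.add_re] at h
    have h2 : ((G c - c) * (2 * Real.pi * Complex.I)).re = 0 := by linarith
    simp at h2
    linarith
  have hδ2 : Metric.ball (0:ℂ) (δ ^ 2) ∈ 𝓝 (0:ℂ) := Metric.ball_mem_nhds _ (by positivity)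
  refine ⟨?_, ?_⟩
  · filter_upwards [hδ2] with c hc
    exact him c (by simpa using hc)
  -- real part
  set S : ℂ → ℝ := fun c => F ((δ : ℂ), c / δ) - F (c / δ, (δ : ℂ))
      - (G c * Complex.log ((φ ((δ : ℂ), c / δ)).1 / δ)).re
      - (G c * Complex.log ((φ (c / δ, (δ : ℂ))).2 / δ)).re
      - 2 * ((G c).re - c.re) * Real.log δ with hS
  have hreS : ContDiff ℝ (⊤ : ℕ∞) Complex.re := Complex.reCLM.contDiff
  have hre : ∀ {f : ℂ → ℂ}, ContDiffAt ℝ (⊤ : ℕ∞) f 0 → ContDiffAt ℝ (⊤ : ℕ∞) (fun c => (f c).re) 0 :=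
    fun hf => hreS.contDiffAt.comp 0 hf
  have hgsm : ContDiffAt ℝ (⊤ : ℕ∞) (fun c => (G c).re - c.re) 0 :=
    (hre hG).sub (hre contDiffAt_id)
  have hmA : ((δ : ℂ), (0:ℂ) / δ) ∈ Metric.ball (0 : ℂ × ℂ) r :=
    hmem _ _ (by rw [hnδ]; exact hδr) (by simpa using hr)
  have hmB : ((0:ℂ) / δ, (δ : ℂ)) ∈ Metric.ball (0 : ℂ × ℂ) r :=
    hmem _ _ (by simpa using hr) (by rw [hnδ]; exact hδr)
  have hAsm : ContDiffAt ℝ (⊤ : ℕ∞) (fun c : ℂ => (((δ : ℂ), c / δ) : ℂ × ℂ)) 0 := by fun_prop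
  have hBsm : ContDiffAt ℝ (⊤ : ℕ∞) (fun c : ℂ => ((c / δ, (δ : ℂ)) : ℂ × ℂ)) 0 := by fun_prop
  have hφat : ∀ p ∈ Metric.ball (0 : ℂ × ℂ) r, ContDiffAt ℝ (⊤ : ℕ∞) φ p := fun p hp =>
    hsm.contDiffAt (hU.mem_nhds (hBU hp))
  have hFat : ∀ p ∈ Metric.ball (0 : ℂ × ℂ) r, ContDiffAt ℝ (⊤ : ℕ∞) F p := fun p hp =>
    hFsm.contDiffAt (Metric.isOpen_ball.mem_nhds hp)
  have hlogsm : ∀ {f : ℂ → ℂ}, ContDiffAt ℝ (⊤ : ℕ∞) f 0 → 0 < (f 0).re →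
      ContDiffAt ℝ (⊤ : ℕ∞) (fun c => Complex.log (f c)) 0 := by
    intro f hf hpos
    have h1 : ContDiffAt ℂ (⊤ : ℕ∞) Complex.log (f 0) := Complex.contDiffAt_log (Or.inl hpos)
    exact (h1.restrict_scalars ℝ).comp 0 hf
  have hSsm : ContDiffAt ℝ (⊤ : ℕ∞) S 0 := by
    have f1 : ContDiffAt ℝ (⊤ : ℕ∞) (fun c : ℂ => F ((δ : ℂ), c / δ)) 0 :=
      ContDiffAt.comp (0:ℂ) (g := F) (hFat _ hmA) hAsm
    have f2 : ContDiffAt ℝ (⊤ : ℕ∞) (fun c : ℂ => F (c / δ, (δ : ℂ))) 0 :=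
      ContDiffAt.comp (0:ℂ) (g := F) (hFat _ hmB) hBsm
    have f3 : ContDiffAt ℝ (⊤ : ℕ∞) (fun c : ℂ => (φ ((δ : ℂ), c / δ)).1 / (δ:ℂ)) 0 :=
      (ContDiffAt.comp (0:ℂ) (g := φ) (hφat _ hmA) hAsm).fst.div_const _
    have f4 : ContDiffAt ℝ (⊤ : ℕ∞) (fun c : ℂ => (φ (c / δ, (δ : ℂ))).2 / (δ:ℂ)) 0 :=
      (ContDiffAt.comp (0:ℂ) (g := φ) (hφat _ hmB) hBsm).snd.div_const _
    have f5 := hlogsm f3 (ff_re_pos ((ra _ hmA hδc (by simp)).trans_lt (by norm_num)))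
    have f6 := hlogsm f4 (ff_re_pos ((rwt _ hmB hδc (by simp)).trans_lt (by norm_num)))
    exact (((f1.sub f2).sub (hre (hG.mul f5))).sub (hre (hG.mul f6))).sub
      ((contDiffAt_const.mul hgsm).mul contDiffAt_const)
  have hδr2 : δ ^ 2 < r ^ 2 := by nlinarith
  refine ff_bootstrap _ S hgsm hSsm ?_ ?_
  · filter_upwards [hδ2] with c hc
    rw [mem_ball_zero_iff] at hc
    by_cases hc0 : c = 0
    · subst hc0; simp [hG0]
    have h1 := rG c hc0 (hc.trans hδr2)
    have hcp : 0 < ‖c‖ := norm_pos_iff.2 hc0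
    have e : G c / c - 1 = (G c - c) / c := by field_simp
    rw [e, norm_div, div_le_iff₀ hcp] at h1
    have h2 := Complex.abs_re_le_norm (G c - c)
    rw [Complex.sub_re] at h2
    linarith
  · filter_upwards [hδ2] with c hc hc0
    rw [mem_ball_zero_iff] at hc
    have hGc : c + (((G c).re - c.re : ℝ) : ℂ) = G c := by
      apply Complex.ext
      · simp
      · simp [him c hc]
    rw [hGc]
    have eA1 : Complex.exp (Complex.log δ) = δ := hexpδ
    have eA2 : c * Complex.exp (-Complex.log δ) = c / δ := by
      rw [Complex.exp_neg, hexpδ, div_eq_mul_inv]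
    have eB1 : Complex.exp (Complex.log c - Complex.log δ) = c / δ := by
      rw [Complex.exp_sub, hexpδ, Complex.exp_log hc0]
    have eB2' : Complex.exp (-(Complex.log c - Complex.log δ)) = δ / c := by
      rw [Complex.exp_neg, eB1, inv_div]
    have eB2 : c * Complex.exp (-(Complex.log c - Complex.log δ)) = δ := by
      rw [eB2']; field_simp
    have h := path c hc0 (Complex.log δ) (Complex.log c - Complex.log δ)
      (by rw [eA1, hnδ]; exact hδr) (by rw [eA2]; exact hnc c hc)
      (by rw [eB1]; exact hnc c hc) (by rw [eB2, hnδ]; exact hδr)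
    unfold ffΦ at h
    rw [eA1, eA2, eB1, eB2, eB2', Complex.exp_neg, eA1, ← div_eq_mul_inv] at h
    have hmBc : (c / δ, (δ : ℂ)) ∈ Metric.ball (0 : ℂ × ℂ) r :=
      hmem _ _ (hnc c hc) (by rw [hnδ]; exact hδr)
    have hB := (hball _ hmBc).1.1
    simp only at hB
    rw [div_mul_cancel₀ _ hδc] at hB
    have hle : ‖c / (δ:ℂ)‖ ≤ ‖(δ : ℂ)‖ := by
      rw [norm_div, hnδ, div_le_iff₀ hδp]; nlinarith
    have pos2 := ff_re_pos ((rwt _ hmBc hδc hle).trans_lt (by norm_num))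
    have pos1 := hρ _ hmBc (div_ne_zero hc0 hδc) hδc
    have hlog := ff_log_mul pos1 pos2
    simp only at hlog
    have e3 : (φ (c / δ, (δ : ℂ))).1 / (c / δ) * ((φ (c / δ, (δ : ℂ))).2 / δ) = G c / c := by
      rw [← hB]; field_simp
    rw [e3] at hlog
    have e4 : (φ (c / δ, (δ : ℂ))).1 * (δ / c) = (φ (c / δ, (δ : ℂ))).1 / (c / δ) := by
      field_simp
    rw [e4] at h
    have e5 : (G c - c) = (((G c).re - c.re : ℝ) : ℂ) := by
      rw [← hGc]; simp
    rw [e5, Complex.re_ofReal_mul, Complex.re_ofReal_mul, Complex.sub_re, Complex.log_re,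
      Complex.log_re, hnδ] at h
    rw [hlog]
    simp only [hS, mul_add, Complex.add_re]
    linarith

end Core

section Assembly

theorem ff_second_order (φ : ℂ × ℂ → ℂ × ℂ) (A : (ℂ × ℂ) →L[ℝ] (ℂ × ℂ)) (G : ℂ → ℂ)
    (L : ℂ →L[ℝ] ℂ) (hφ : HasFDerivAt φ A 0) (hφ0 : φ 0 = 0) (hG : HasFDerivAt G L 0)
    (hG0 : G 0 = 0)
    (hqG : ∀ᶠ p in 𝓝 (0 : ℂ × ℂ), (φ p).1 * (φ p).2 = G (p.1 * p.2)) (p : ℂ × ℂ) :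
    (A p).1 * (A p).2 = L (p.1 * p.2) := by
  have d1 : HasDerivAt (fun t : ℝ => φ (t • p)) (A p) 0 := by
    have hl : HasDerivAt (fun t : ℝ => t • p) p 0 := by
      simpa using (hasDerivAt_id (0:ℝ)).smul_const p
    have hφ' : HasFDerivAt φ A ((0:ℝ) • p) := by rwa [zero_smul]
    exact hφ'.comp_hasDerivAt (0:ℝ) hl
  have d2 : HasDerivAt (fun t : ℝ => G (t • (p.1 * p.2))) (L (p.1 * p.2)) 0 := by
    have hl : HasDerivAt (fun t : ℝ => t • (p.1 * p.2)) (p.1 * p.2) 0 := by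
      simpa using (hasDerivAt_id (0:ℝ)).smul_const (p.1 * p.2)
    have hG' : HasFDerivAt G L ((0:ℝ) • (p.1 * p.2)) := by rwa [zero_smul]
    exact hG'.comp_hasDerivAt (0:ℝ) hl
  rw [hasDerivAt_iff_tendsto_slope_zero] at d1 d2
  simp only [zero_add, zero_smul, hφ0, hG0, sub_zero] at d1 d2
  have hsq : Tendsto (fun t : ℝ => t ^ 2) (𝓝[≠] 0) (𝓝[≠] 0) := by
    refine tendsto_nhdsWithin_iff.2 ⟨?_, ?_⟩
    · have : Tendsto (fun t : ℝ => t ^ 2) (𝓝 0) (𝓝 ((0:ℝ) ^ 2)) := (continuous_pow 2).tendsto 0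
      rw [zero_pow two_ne_zero] at this
      exact this.mono_left nhdsWithin_le_nhds
    · filter_upwards [self_mem_nhdsWithin] with t ht
      exact pow_ne_zero 2 ht
  have t2 := d2.comp hsq
  have t1 : Tendsto (fun t : ℝ => (t⁻¹ • φ (t • p)).1 * (t⁻¹ • φ (t • p)).2) (𝓝[≠] 0)
      (𝓝 ((A p).1 * (A p).2)) :=
    ((continuous_fst.tendsto _).comp d1).mul ((continuous_snd.tendsto _).comp d1)
  refine tendsto_nhds_unique t1 (t2.congr' ?_)
  have hev : ∀ᶠ t : ℝ in 𝓝 0, (φ (t • p)).1 * (φ (t • p)).2 = G ((t • p).1 * (t • p).2) := by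
    have hc : Tendsto (fun t : ℝ => t • p) (𝓝 0) (𝓝 0) := by
      have : Continuous (fun t : ℝ => t • p) := by fun_prop
      simpa using this.tendsto 0
    exact hc.eventually hqG
  filter_upwards [nhdsWithin_le_nhds hev] with t ht
  have e : (t ^ 2) • (p.1 * p.2) = (t • p).1 * (t • p).2 := by
    simp only [Prod.smul_fst, Prod.smul_snd, Complex.real_smul]; push_cast; ring
  simp only [Function.comp]
  rw [e, ← ht]
  simp only [Prod.smul_fst, Prod.smul_snd, Complex.real_smul]; push_cast; ring

theorem ff_complex (φ : ℂ × ℂ → ℂ × ℂ) (U : Set (ℂ × ℂ)) (hU : IsOpen U) (h0 : (0 : ℂ × ℂ) ∈ U)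
    (hφ0 : φ 0 = 0) (hsm : ContDiffOn ℝ (⊤ : ℕ∞) φ U)
    (hsymp : ∀ p ∈ U, ∀ u v, ffω (fderiv ℝ φ p u) (fderiv ℝ φ p v) = ffω u v)
    (hfol : ∀ S : Set (ℂ × ℂ), S ⊆ U → IsPreconnected S →
      (∀ x ∈ S, ∀ y ∈ S, x.1 * x.2 = y.1 * y.2) →
      ∀ x ∈ S, ∀ y ∈ S, (φ x).1 * (φ x).2 = (φ y).1 * (φ y).2) :
    ∃ (G : ℂ → ℂ) (ε1 ε2 : ℝ), (ε1 = 1 ∨ ε1 = -1) ∧ (ε2 = 1 ∨ ε2 = -1) ∧ G 0 = 0 ∧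
      (∀ᶠ c in 𝓝 (0 : ℂ), ContDiffAt ℝ (⊤ : ℕ∞) G c) ∧
      (∀ᶠ p in 𝓝 (0 : ℂ × ℂ), (φ p).1 * (φ p).2 = G (p.1 * p.2)) ∧
      (∀ᶠ c in 𝓝 (0:ℂ), (G c).im = ε2 * c.im) ∧
      ∀ n : ℕ, (fun c => (G c).re - ε1 * c.re) =O[𝓝 0] (fun c : ℂ => ‖c‖ ^ n) := by
  obtain ⟨G, hGsm, hqG⟩ := ff_exists_G φ U hU h0 hsm hfol
  have hG0 : G 0 = 0 := by
    have := hqG.self_of_nhds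
    simpa [hφ0] using this.symm
  have hG := hGsm.self_of_nhds
  have hφd : ∀ p ∈ U, HasFDerivAt φ (fderiv ℝ φ p) p := fun p hp =>
    ((hsm.contDiffAt (hU.mem_nhds hp)).differentiableAt (by simp)).hasFDerivAt
  have hGd : HasFDerivAt G (fderiv ℝ G 0) 0 := (hG.differentiableAt (by simp)).hasFDerivAt
  set A := fderiv ℝ φ 0 with hA
  have hAq := ff_second_order φ A G _ (hφd 0 h0) hφ0 hGd hG0 hqG
  have hAs := hsymp 0 h0
  obtain ⟨hbij, ε1, ε2, he1, he2, hL⟩ := ff_linear A _ hAs hAq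
  have s1 : ε1 * ε1 = 1 := by rcases he1 with h | h <;> rw [h] <;> norm_num
  have s2 : ε2 * ε2 = 1 := by rcases he2 with h | h <;> rw [h] <;> norm_num
  let B : (ℂ × ℂ) ≃L[ℝ] (ℂ × ℂ) :=
    (LinearEquiv.ofBijective (A : (ℂ × ℂ) →ₗ[ℝ] (ℂ × ℂ)) hbij).toContinuousLinearEquiv
  have hB : ∀ x, B x = A x := fun x => rfl
  have hBA : ∀ x, B.symm (A x) = x := fun x => by rw [← hB]; exact B.symm_apply_apply x
  have hAB : ∀ x, A (B.symm x) = x := fun x => by rw [← hB]; exact B.apply_symm_apply x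
  have hBs : ∀ u v, ffω (B.symm u) (B.symm v) = ffω u v := by
    intro u v
    rw [← hAs, hAB, hAB]
  have hBq : ∀ p, (B.symm p).1 * (B.symm p).2 = ⟨ε1 * (p.1 * p.2).re, ε2 * (p.1 * p.2).im⟩ := by
    intro p
    have h := hAq (B.symm p)
    rw [hAB, hL] at h
    rw [h]
    apply Complex.ext
    · simp only; rw [← mul_assoc, s1, one_mul]
    · simp only; rw [← mul_assoc, s2, one_mul]
  have hcomp : ∀ p ∈ U, HasFDerivAt (fun p => B.symm (φ p))
      ((B.symm : (ℂ × ℂ) →L[ℝ] (ℂ × ℂ)).comp (fderiv ℝ φ p)) p := fun p hp =>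
    (B.symm : (ℂ × ℂ) →L[ℝ] (ℂ × ℂ)).hasFDerivAt.comp p (hφd p hp)
  have hG'sm : ContDiffAt ℝ (⊤ : ℕ∞)
      (fun c => ((ε1 * (G c).re : ℝ) : ℂ) + ((ε2 * (G c).im : ℝ) : ℂ) * Complex.I) 0 := by
    have r1 : ContDiffAt ℝ (⊤ : ℕ∞) (fun c => (G c).re) 0 :=
      Complex.reCLM.contDiff.contDiffAt.comp 0 hG
    have r2 : ContDiffAt ℝ (⊤ : ℕ∞) (fun c => (G c).im) 0 :=
      Complex.imCLM.contDiff.contDiffAt.comp 0 hG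
    have r3 : ContDiffAt ℝ (⊤ : ℕ∞) (fun c => ((ε1 * (G c).re : ℝ) : ℂ)) 0 :=
      Complex.ofRealCLM.contDiff.contDiffAt.comp 0 (contDiffAt_const.mul r1)
    have r4 : ContDiffAt ℝ (⊤ : ℕ∞) (fun c => ((ε2 * (G c).im : ℝ) : ℂ)) 0 :=
      Complex.ofRealCLM.contDiff.contDiffAt.comp 0 (contDiffAt_const.mul r2)
    exact r3.add (r4.mul contDiffAt_const)
  obtain ⟨c1, c2⟩ := ff_core (fun p => B.symm (φ p)) U hU h0
    (B.symm.contDiff.comp_contDiffOn hsm) (by simp [hφ0])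
    (by
      rw [(hcomp 0 h0).fderiv]
      refine ContinuousLinearMap.ext fun x => ?_
      exact hBA x)
    (by
      intro p hp u v
      rw [(hcomp p hp).fderiv]
      exact (hBs _ _).trans (hsymp p hp u v))
    _ hG'sm
    (by
      filter_upwards [hqG] with p hp
      rw [hBq, hp]
      apply Complex.ext <;> simp)
  refine ⟨G, ε1, ε2, he1, he2, hG0, hGsm, hqG, ?_, ?_⟩
  · filter_upwards [c1] with c hc
    simp at hc
    rw [← hc, ← mul_assoc, s2, one_mul]
  · intro n
    have := (c2 n).const_mul_left ε1
    refine this.congr_left fun c => ?_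
    simp
    linear_combination ((G c).re) * s1

end Assembly

section Transfer

/-- The real linear identification of ℝ⁴ with ℂ². -/
def ffe : E4 ≃L[ℝ] (ℂ × ℂ) :=
  LinearEquiv.toContinuousLinearEquiv
    { toFun := fun p => (⟨p 0, -p 2⟩, ⟨p 1, p 3⟩)
      invFun := fun z => ![z.1.re, z.2.re, -z.1.im, z.2.im]
      map_add' := by
        intro x y
        refine Prod.ext (Complex.ext ?_ ?_) (Complex.ext ?_ ?_) <;> simp
        ring
      map_smul' := by
        intro x y
        refine Prod.ext (Complex.ext ?_ ?_) (Complex.ext ?_ ?_) <;> simp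
      left_inv := by
        intro x
        funext i
        fin_cases i <;> simp
      right_inv := by
        intro x
        ext <;> simp }

theorem ffe_apply (p : E4) : ffe p = (⟨p 0, -p 2⟩, ⟨p 1, p 3⟩) := rfl

/-- The real linear identification of ℝ² with ℂ. -/
def ffe2 : E2 ≃L[ℝ] ℂ :=
  LinearEquiv.toContinuousLinearEquiv
    { toFun := fun p => ⟨p 0, p 1⟩
      invFun := fun z => ![z.re, z.im]
      map_add' := by
        intro x y
        apply Complex.ext <;> simp
      map_smul' := by
        intro x y
        apply Complex.ext <;> simp
      left_inv := by
        intro x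
        funext i
        fin_cases i <;> simp
      right_inv := by
        intro x
        apply Complex.ext <;> simp }

theorem ffe2_apply (p : E2) : ffe2 p = ⟨p 0, p 1⟩ := rfl

theorem ffe_q (p : E4) : (ffe p).1 * (ffe p).2 = ffe2 (qmap p) := by
  rw [ffe_apply, ffe2_apply]
  apply Complex.ext
  · simp [qmap, q1]
  · simp [qmap, q2]; ring

theorem ffe_ω (u v : E4) : ffω (ffe u) (ffe v) = omega0 u v := by
  simp only [ffω, ffe_apply, omega0, Complex.sub_re, Complex.mul_re]
  ring

/-- `qmap` is open at the origin. -/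
theorem ff_section (P : E2 → Prop) (h : ∀ᶠ p in 𝓝 (0 : E4), P (qmap p)) :
    ∀ᶠ c in 𝓝 (0 : E2), P c := by
  have h1 := eventually_eventually_nhds.2 h
  have hc1 : Continuous (fun δ : ℝ => (![δ, 0, 0, 0] : E4)) := by
    refine continuous_pi fun i => ?_
    fin_cases i <;> simp <;> fun_prop
  have z4 : (![0, 0, 0, 0] : E4) = 0 := by
    funext i; fin_cases i <;> rfl
  have t1 : Tendsto (fun δ : ℝ => (![δ, 0, 0, 0] : E4)) (𝓝[≠] 0) (𝓝 0) := by
    have := hc1.tendsto 0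
    rw [z4] at this
    exact this.mono_left nhdsWithin_le_nhds
  obtain ⟨δ, hδ, hne⟩ := ((t1.eventually h1).and self_mem_nhdsWithin).exists
  have hne' : δ ≠ 0 := hne
  have hc2 : Continuous (fun c : E2 => (![δ, c 0 / δ, 0, c 1 / δ] : E4)) := by
    refine continuous_pi fun i => ?_
    fin_cases i <;> simp <;> fun_prop
  have t2 : Tendsto (fun c : E2 => (![δ, c 0 / δ, 0, c 1 / δ] : E4)) (𝓝 0)
      (𝓝 ![δ, 0, 0, 0]) := by
    simpa using hc2.tendsto 0
  filter_upwards [t2.eventually hδ] with c hc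
  have e : qmap ![δ, c 0 / δ, 0, c 1 / δ] = c := by
    funext i
    fin_cases i
    · simp [qmap, q1]; field_simp
    · simp [qmap, q2]; field_simp
  rwa [e] at hc

end Transfer

/-- **Uniqueness of the normal form (Vũ Ngọc).**
If `φ` is a local symplectomorphism of `(ℝ⁴,0)` preserving the focus-focus foliation
`{q = const}` near the origin (i.e. `q∘φ` is constant on connected subsets of level sets
of `q`), then there is a unique germ of diffeomorphism `G : (ℝ²,0) → (ℝ²,0)` with
`q ∘ φ = G ∘ q`, and `G = (G₁,G₂)` where `G₂(c₁,c₂) = ε₂c₂` and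
`(c₁,c₂) ↦ G₁(c₁,c₂) − ε₁c₁` is flat at the origin, for some signs `ε₁, ε₂ = ±1`. -/
theorem focus_focus_foliation_preserving_normal_form
    (φ : E4 → E4) (U : Set E4) (hUopen : IsOpen U) (hU0 : (0:E4) ∈ U)
    (hφ0 : φ 0 = 0) (hsm : ContDiffOn ℝ (⊤ : ℕ∞) φ U) (hinj : Set.InjOn φ U)
    (hsymp : ∀ p ∈ U, ∀ u v : E4,
      omega0 (fderiv ℝ φ p u) (fderiv ℝ φ p v) = omega0 u v)
    (hfol : ∀ S : Set E4, S ⊆ U → IsPreconnected S →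
      (∀ x ∈ S, ∀ y ∈ S, qmap x = qmap y) →
      ∀ x ∈ S, ∀ y ∈ S, qmap (φ x) = qmap (φ y)) :
    ∃ (G : E2 → E2) (ε1 ε2 : ℝ),
      (ε1 = 1 ∨ ε1 = -1) ∧ (ε2 = 1 ∨ ε2 = -1) ∧
      G 0 = 0 ∧
      (∃ W ∈ 𝓝 (0:E2), ContDiffOn ℝ (⊤ : ℕ∞) G W ∧ Set.InjOn G W) ∧
      (∀ᶠ p in 𝓝 (0:E4), qmap (φ p) = G (qmap p)) ∧
      (∀ c : E2, G c 1 = ε2 * c 1) ∧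
      flatAt (fun c : E2 => G c 0 - ε1 * c 0) 0 ∧
      (∀ G' : E2 → E2, (∀ᶠ p in 𝓝 (0:E4), qmap (φ p) = G' (qmap p)) →
        ∀ᶠ c in 𝓝 (0:E2), G' c = G c) := by
  obtain ⟨G, ε1, ε2, he1, he2, hG0, hGsm, hqG, him, hre⟩ :=
    ff_complex (fun z => ffe (φ (ffe.symm z))) (ffe.symm ⁻¹' U)
      (hUopen.preimage ffe.symm.continuous) (by simpa using hU0) (by simp [hφ0])
      (ffe.contDiff.comp_contDiffOn
        (hsm.comp ffe.symm.contDiff.contDiffOn (fun z hz => hz)))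
      (by
        intro z hz u v
        have hd : HasFDerivAt φ (fderiv ℝ φ (ffe.symm z)) (ffe.symm z) :=
          ((hsm.contDiffAt (hUopen.mem_nhds hz)).differentiableAt (by simp)).hasFDerivAt
        have hd2 : HasFDerivAt (fun z => ffe (φ (ffe.symm z)))
            ((ffe : E4 →L[ℝ] (ℂ × ℂ)).comp ((fderiv ℝ φ (ffe.symm z)).comp
              (ffe.symm : (ℂ × ℂ) →L[ℝ] E4))) z :=
          (ffe : E4 →L[ℝ] (ℂ × ℂ)).hasFDerivAt.comp z
            (hd.comp z (ffe.symm : (ℂ × ℂ) →L[ℝ] E4).hasFDerivAt)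
        rw [hd2.fderiv]
        have h1 := hsymp _ hz (ffe.symm u) (ffe.symm v)
        rw [← ffe_ω, ← ffe_ω, ffe.apply_symm_apply, ffe.apply_symm_apply] at h1
        exact h1)
      (by
        intro S hS hpre hconst x hx y hy
        rw [ffe_q, ffe_q]
        congr 1
        refine hfol (ffe.symm '' S) ?_ (hpre.image _ ffe.symm.continuous.continuousOn) ?_
          _ ⟨x, hx, rfl⟩ _ ⟨y, hy, rfl⟩
        · rintro _ ⟨z, hz, rfl⟩
          exact hS hz
        · rintro _ ⟨a, ha, rfl⟩ _ ⟨b, hb, rfl⟩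
          apply ffe2.injective
          rw [← ffe_q, ← ffe_q, ffe.apply_symm_apply, ffe.apply_symm_apply]
          exact hconst a ha b hb)
  have te2 : Tendsto ffe2 (𝓝 0) (𝓝 0) := by
    simpa using ffe2.continuous.tendsto 0
  have te4 : Tendsto ffe (𝓝 0) (𝓝 0) := by
    simpa using ffe.continuous.tendsto 0
  have tq : Tendsto qmap (𝓝 0) (𝓝 0) := by
    have hc : Continuous qmap := by
      unfold qmap q1 q2
      refine continuous_pi fun i => ?_
      fin_cases i <;> simp <;> fun_prop
    have hz : qmap 0 = 0 := by
      funext i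
      fin_cases i <;> simp [qmap, q1, q2]
    simpa [hz] using hc.tendsto 0
  set H : E2 → E2 := fun c => ![(G (ffe2 c)).re, ε2 * c 1] with hH
  set f : E2 → ℝ := fun c => H c 0 - ε1 * c 0 with hf
  have hG1 : ∀ᶠ c in 𝓝 (0 : E2), ContDiffAt ℝ (⊤ : ℕ∞) (fun c => (G (ffe2 c)).re) c := by
    filter_upwards [te2.eventually hGsm] with c hc
    exact Complex.reCLM.contDiff.contDiffAt.comp c
      (ContDiffAt.comp c hc ffe2.contDiff.contDiffAt)
  have hHsm : ∀ᶠ c in 𝓝 (0 : E2), ContDiffAt ℝ (⊤ : ℕ∞) H c := by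
    filter_upwards [hG1] with c hc
    rw [contDiffAt_pi]
    intro i
    fin_cases i
    · exact hc
    · exact contDiffAt_const.mul (contDiff_apply ℝ ℝ (1 : Fin 2)).contDiffAt
  have hfsm : ContDiffAt ℝ (⊤ : ℕ∞) f 0 :=
    hG1.self_of_nhds.sub (contDiffAt_const.mul (contDiff_apply ℝ ℝ (0 : Fin 2)).contDiffAt)
  have hfO : ∀ m : ℕ, f =O[𝓝 0] (fun c : E2 => ‖c‖ ^ m) := by
    intro m
    have h1 := (hre m).comp_tendsto te2
    have h2 : (fun c : E2 => ffe2 c) =O[𝓝 0] (fun c : E2 => c) :=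
      (ffe2 : E2 →L[ℝ] ℂ).isBigO_id _
    exact h1.trans (h2.norm_norm.pow m)
  have heq : ∀ᶠ p in 𝓝 (0:E4), qmap (φ p) = H (qmap p) := by
    filter_upwards [te4.eventually hqG, tq.eventually (te2.eventually him)] with p h1 h2
    simp only [ffe.symm_apply_apply] at h1
    rw [ffe_q, ffe_q] at h1
    funext i
    fin_cases i
    · have := congrArg Complex.re h1
      simpa [ffe2_apply, hH] using this
    · have := congrArg Complex.im h1
      rw [h2] at this
      simpa [ffe2_apply, hH] using this
  refine ⟨H, ε1, ε2, he1, he2, ?_, ?_, heq, fun c => rfl, ?_, ?_⟩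
  · funext i
    fin_cases i <;> simp [hH, hG0]
  · have hstrict : HasStrictFDerivAt f (0 : E2 →L[ℝ] ℝ) 0 := by
      have hd : HasFDerivAt f (0 : E2 →L[ℝ] ℝ) 0 := by
        refine Asymptotics.IsBigO.hasFDerivAt (n := 2) ?_ (by norm_num)
        simpa using hfO 2
      exact hfsm.hasStrictFDerivAt' hd (by simp)
    have hl := hstrict.isLittleO.def (c := 1/2) (by norm_num)
    rw [nhds_prod_eq, eventually_prod_self_iff'] at hl
    obtain ⟨W, hW, hWl⟩ := hl
    refine ⟨W ∩ {c | ContDiffAt ℝ (⊤ : ℕ∞) H c}, inter_mem hW hHsm,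
      fun c hc => ContDiffAt.contDiffWithinAt (𝕜 := ℝ) (f := H) (x := c) hc.2, ?_⟩
    intro x hx y hy hxy
    have h1 : x 1 = y 1 := by
      have : ε2 * x 1 = ε2 * y 1 := congrFun hxy 1
      rcases he2 with h | h <;> rw [h] at this <;> linarith
    have h0 : H x 0 = H y 0 := congrFun hxy 0
    have h2 := hWl x hx.1 y hy.1
    simp only at h2
    have h3 : ‖f x - f y‖ = |x 0 - y 0| := by
      simp only [hf, Real.norm_eq_abs]
      rw [h0]
      rcases he1 with h | h <;> rw [h]
      · rw [← abs_neg]; congr 1; ring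
      · congr 1; ring
    have h4 : ‖x - y‖ ≤ |x 0 - y 0| := by
      rw [pi_norm_le_iff_of_nonneg (abs_nonneg _)]
      intro i
      fin_cases i
      · simp
      · simp [h1]
    simp only [zero_apply, sub_zero] at h2
    rw [h3] at h2
    have h5 : |x 0 - y 0| = 0 := by
      have := abs_nonneg (x 0 - y 0)
      linarith
    have h6 : ‖x - y‖ = 0 := by
      have := norm_nonneg (x - y)
      linarith
    exact sub_eq_zero.1 (norm_eq_zero.1 h6)
  · intro n
    exact ff_flat_aux n hfsm hfO
  · intro G' hG'
    refine ff_section (fun c => G' c = H c) ?_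
    filter_upwards [hG', heq] with p h1 h2
    rw [← h1, h2]
end
end

section
/- Let φ be a local symplectomorphism of (ℝ⁴,0) (φ(0)=0 and φ*ω₀=ω₀ near 0) such that q∘φ = q near the origin, where q=(q₁,q₂). Then φ = A∘χ, where A is a linear symplectomorphism of (ℝ⁴,ω₀) with q∘A = q, and χ is the time-1 Hamiltonian flow of a smooth function of the form g(q₁,q₂) for some smooth g:(ℝ²,0)→ℝ. -/
open Filter Topology Set MeasureTheory

noncomputable section

/-- Partial derivative of `f` in the `i`-th coordinate direction. -/
def pd (i : Fin 4) (f : E4 → ℝ) (p : E4) : ℝ := fderiv ℝ f p (Pi.single i 1)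

/-- The Hamiltonian vector field `X_H = (∂H/∂ξ₁, −∂H/∂x₁, ∂H/∂ξ₂, −∂H/∂x₂)`
of `H` with respect to `ω₀`, in the coordinates `(x₁, ξ₁, x₂, ξ₂)`. -/
def HamVF (H : E4 → ℝ) (p : E4) : E4 :=
  ![pd 1 H p, -(pd 0 H p), pd 3 H p, -(pd 2 H p)]

def om (a b : ℂ × ℂ) : ℝ := (a.2 * b.1 - a.1 * b.2).re

lemma om_nondeg (a : ℂ × ℂ) (h : ∀ b, om a b = 0) : a = 0 := by
  have h1 := h (1, 0)
  have h2 := h (Complex.I, 0)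
  have h3 := h (0, 1)
  have h4 := h (0, Complex.I)
  simp [om] at h1 h2 h3 h4
  ext1
  · exact Complex.ext h3 h4
  · exact Complex.ext h1 h2

lemma om_sub (a a' b : ℂ × ℂ) : om (a - a') b = om a b - om a' b := by
  simp [om]; ring

lemma symp_surj (L : ℂ × ℂ →L[ℝ] ℂ × ℂ) (hL : ∀ a b, om (L a) (L b) = om a b) :
    Function.Surjective L := by
  have hinj : Function.Injective (L : ℂ × ℂ →ₗ[ℝ] ℂ × ℂ) := by
    rw [injective_iff_map_eq_zero]
    intro a ha
    apply om_nondeg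
    intro b
    rw [← hL]
    have : L a = 0 := ha
    simp [this, om]
  exact LinearMap.injective_iff_surjective.1 hinj

lemma equivar_inf (L : ℂ × ℂ →L[ℝ] ℂ × ℂ) (hL : ∀ a b, om (L a) (L b) = om a b)
    (p P : ℂ × ℂ) (hdq : ∀ w, P.1 * (L w).2 + P.2 * (L w).1 = p.1 * w.2 + p.2 * w.1) (l : ℂ) :
    L (l * p.1, -(l * p.2)) = (l * P.1, -(l * P.2)) := by
  rw [← sub_eq_zero]
  apply om_nondeg
  intro b
  obtain ⟨w, rfl⟩ := symp_surj L hL b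
  rw [om_sub, hL]
  have := hdq w
  have e1 : om (l * p.1, -(l * p.2)) w = (-(l * (p.1 * w.2 + p.2 * w.1))).re := by
    unfold om; congr 1; ring
  have e2 : om (l * P.1, -(l * P.2)) (L w) = (-(l * (P.1 * (L w).2 + P.2 * (L w).1))).re := by
    unfold om; congr 1; ring
  rw [e1, e2, this, sub_self]

lemma flow_mem {p : ℂ × ℂ} {l : ℂ} {d : ℝ} (h1 : ‖p.1‖ ≤ d) (h2 : ‖p.2‖ ≤ d)
    (h3 : ‖Complex.exp l * p.1‖ ≤ d) (h4 : ‖Complex.exp (-l) * p.2‖ ≤ d) {t : ℝ} (h0 : 0 ≤ t)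
    (ht : t ≤ 1) : ‖Complex.exp (t * l) * p.1‖ ≤ d ∧ ‖Complex.exp (-(t * l)) * p.2‖ ≤ d := by
  simp only [norm_mul, Complex.norm_exp] at *
  simp only [Complex.neg_re, Complex.re_ofReal_mul] at *
  rcases le_total 0 l.re with hl | hl
  · constructor
    · refine le_trans ?_ h3
      gcongr
      nlinarith
    · refine le_trans ?_ h2
      apply mul_le_of_le_one_left (norm_nonneg _)
      rw [Real.exp_le_one_iff]; nlinarith
  · constructor
    · refine le_trans ?_ h1
      apply mul_le_of_le_one_left (norm_nonneg _)
      rw [Real.exp_le_one_iff]; nlinarith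
    · refine le_trans ?_ h4
      gcongr
      nlinarith

lemma equivar {Φ : ℂ × ℂ → ℂ × ℂ} {U : Set (ℂ × ℂ)} (hU : IsOpen U)
    (hsm : ContDiffOn ℝ (⊤ : ℕ∞) Φ U)
    (hs : ∀ p ∈ U, ∀ a b, om (fderiv ℝ Φ p a) (fderiv ℝ Φ p b) = om a b)
    (hq : ∀ p ∈ U, (Φ p).1 * (Φ p).2 = p.1 * p.2) {d : ℝ} (hd : Metric.closedBall 0 d ⊆ U)
    {p : ℂ × ℂ} {l : ℂ} (h1 : ‖p.1‖ ≤ d) (h2 : ‖p.2‖ ≤ d)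
    (h3 : ‖Complex.exp l * p.1‖ ≤ d) (h4 : ‖Complex.exp (-l) * p.2‖ ≤ d) :
    Φ (Complex.exp l * p.1, Complex.exp (-l) * p.2) =
      (Complex.exp l * (Φ p).1, Complex.exp (-l) * (Φ p).2) := by
  have hdiff : ∀ p ∈ U, HasFDerivAt Φ (fderiv ℝ Φ p) p := fun p hp =>
    ((hsm.contDiffAt (hU.mem_nhds hp)).differentiableAt (by simp)).hasFDerivAt
  have hinf : ∀ p ∈ U, fderiv ℝ Φ p (l * p.1, -(l * p.2)) = (l * (Φ p).1, -(l * (Φ p).2)) := by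
    intro p hp
    apply equivar_inf _ (hs p hp)
    intro w
    have e1 := (hdiff p hp).fst.mul (hdiff p hp).snd
    have e2 : HasFDerivAt (fun p : ℂ × ℂ => p.1 * p.2) _ p :=
      (hasFDerivAt_fst (𝕜 := ℝ) (p := p)).mul (hasFDerivAt_snd (𝕜 := ℝ) (p := p))
    have e3 := e2.congr_of_eventuallyEq
      (f₁ := fun p => (Φ p).1 * (Φ p).2) (Filter.eventually_of_mem (hU.mem_nhds hp) hq)
    have := DFunLike.congr_fun (e1.unique e3) w
    simpa using this
  set γ : ℝ → ℂ × ℂ := fun t => (Complex.exp (t * l) * p.1, Complex.exp (-(t * l)) * p.2) with hγ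
  have hγd : ∀ t, HasDerivAt γ (l * (γ t).1, -(l * (γ t).2)) t := by
    intro t
    have ht : HasDerivAt (fun t : ℝ => (t : ℂ) * l) l t := by
      simpa using (Complex.ofRealCLM.hasDerivAt (x := t)).mul_const l
    have a := (ht.cexp).mul_const p.1
    have b := (ht.neg.cexp).mul_const p.2
    refine (a.prodMk b).congr_deriv ?_
    ext1 <;> simp [hγ] <;> ring
  have hγU : ∀ t ∈ Icc (0:ℝ) 1, γ t ∈ U := by
    intro t ht
    apply hd
    have := flow_mem h1 h2 h3 h4 ht.1 ht.2
    simpa [hγ, Prod.norm_def] using this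
  set F : ℝ → ℂ × ℂ := fun t =>
    (Complex.exp (-(t * l)) * (Φ (γ t)).1, Complex.exp (t * l) * (Φ (γ t)).2) with hF
  have hFd : ∀ t ∈ Icc (0:ℝ) 1, HasDerivAt F 0 t := by
    intro t htt
    have ht : HasDerivAt (fun t : ℝ => (t : ℂ) * l) l t := by
      simpa using (Complex.ofRealCLM.hasDerivAt (x := t)).mul_const l
    have c := (hdiff _ (hγU t htt)).comp_hasDerivAt t (hγd t)
    rw [hinf _ (hγU t htt)] at c
    have c1 := (ContinuousLinearMap.fst ℝ ℂ ℂ).hasFDerivAt.comp_hasDerivAt t c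
    have c2 := (ContinuousLinearMap.snd ℝ ℂ ℂ).hasFDerivAt.comp_hasDerivAt t c
    have a := (ht.neg.cexp).mul c1
    have b := (ht.cexp).mul c2
    refine (a.prodMk b).congr_deriv ?_
    ext1 <;> simp <;> ring
  have hc : F 1 = F 0 := by
    have := constant_of_has_deriv_right_zero (f := F) (a := 0) (b := 1)
      (fun t ht => (hFd t ht).continuousAt.continuousWithinAt)
      (fun t ht => (hFd t ⟨ht.1, ht.2.le⟩).hasDerivWithinAt)
    exact this 1 (by simp)
  have e0 : Complex.exp l * Complex.exp (-l) = 1 := by rw [← Complex.exp_add]; simp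
  simp only [hF, hγ, Prod.mk.injEq] at hc
  simp at hc
  ext1
  · rw [← hc.1, ← mul_assoc, e0, one_mul]
  · simp only []
    rw [← hc.2, ← mul_assoc, mul_comm (Complex.exp (-l)) (Complex.exp l), e0, one_mul]

lemma section_eq {Φ : ℂ × ℂ → ℂ × ℂ} {U : Set (ℂ × ℂ)} (hU : IsOpen U)
    (hsm : ContDiffOn ℝ (⊤ : ℕ∞) Φ U)
    (hs : ∀ p ∈ U, ∀ a b, om (fderiv ℝ Φ p a) (fderiv ℝ Φ p b) = om a b)
    (hq : ∀ p ∈ U, (Φ p).1 * (Φ p).2 = p.1 * p.2) {d : ℝ} (hd0 : 0 < d)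
    (hd : Metric.closedBall 0 d ⊆ U)
    {p : ℂ × ℂ} (h1 : ‖p.1‖ ≤ d) (h2 : ‖p.2‖ ≤ d) (hp : p.1 ≠ 0) :
    (Φ p).1 = (Φ ((d : ℂ), p.1 * p.2 / d)).1 / d * p.1 ∧
    (Φ p).2 * p.1 = (Φ ((d : ℂ), p.1 * p.2 / d)).2 * d := by
  have hdc : (d : ℂ) ≠ 0 := by exact_mod_cast hd0.ne'
  have hl : Complex.exp (Complex.log (p.1 / d)) = p.1 / d := Complex.exp_log (by positivity)
  have hl' : Complex.exp (-Complex.log (p.1 / d)) = d / p.1 := by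
    rw [Complex.exp_neg, hl, inv_div]
  have e1 : p.1 / d * (d : ℂ) = p.1 := by field_simp
  have e2 : d / p.1 * (p.1 * p.2 / d) = p.2 := by field_simp
  have := equivar (p := ((d : ℂ), p.1 * p.2 / d)) (l := Complex.log (p.1 / d)) hU hsm hs hq hd
    (by simp [abs_of_pos hd0])
    (by
      simp only [norm_div, norm_mul, Complex.norm_real, Real.norm_eq_abs, abs_of_pos hd0]
      rw [div_le_iff₀ hd0]
      gcongr)
    (by simp only [hl, e1]; exact h1)
    (by simp only [hl', e2]; exact h2)
  simp only [hl, hl', e1, e2] at this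
  constructor
  · rw [show Φ p = Φ (p.1, p.2) from rfl, this]; simp only []; ring
  · rw [show Φ p = Φ (p.1, p.2) from rfl, this]; simp only []; field_simp

lemma complex_form {Φ : ℂ × ℂ → ℂ × ℂ} {U : Set (ℂ × ℂ)} (hU : IsOpen U) (hU0 : 0 ∈ U)
    (h00 : Φ 0 = 0)
    (hsm : ContDiffOn ℝ (⊤ : ℕ∞) Φ U) (hinj : InjOn Φ U)
    (hs : ∀ p ∈ U, ∀ a b, om (fderiv ℝ Φ p a) (fderiv ℝ Φ p b) = om a b)
    (hq : ∀ p ∈ U, (Φ p).1 * (Φ p).2 = p.1 * p.2) :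
    ∃ (a : ℂ) (lam : ℂ → ℂ) (r d : ℝ), a ≠ 0 ∧ 0 < r ∧ 0 < d ∧
      ContDiffOn ℝ (⊤ : ℕ∞) lam (Metric.ball 0 r) ∧
      (∀ c ∈ Metric.ball (0:ℂ) r,
        (fderiv ℝ lam c Complex.I - Complex.I * fderiv ℝ lam c 1).re = 0) ∧
      ∀ p : ℂ × ℂ, ‖p‖ < d → p.1 * p.2 ∈ Metric.ball (0:ℂ) r →
        Φ p = (a * (Complex.exp (lam (p.1 * p.2)) * p.1),
          a⁻¹ * (Complex.exp (-lam (p.1 * p.2)) * p.2)) := by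
  obtain ⟨d, hd0, hd⟩ := Metric.nhds_basis_closedBall.mem_iff.1 (hU.mem_nhds hU0)
  have hdc : (d : ℂ) ≠ 0 := by exact_mod_cast hd0.ne'
  have hsec := fun p => section_eq (p := p) hU hsm hs hq hd0 hd
  have hmem : ∀ p : ℂ × ℂ, ‖p.1‖ ≤ d → ‖p.2‖ ≤ d → p ∈ U := fun p h1 h2 =>
    hd (by simpa [Prod.norm_def] using ⟨h1, h2⟩)
  have hca : ∀ p ∈ U, ContDiffAt ℝ (⊤ : ℕ∞) Φ p := fun p hp => hsm.contDiffAt (hU.mem_nhds hp)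
  set σ : ℂ → ℂ × ℂ := fun c => ((d : ℂ), c / d) with hσ
  have hσU : ∀ c ∈ Metric.ball (0:ℂ) (d * d), σ c ∈ U := by
    intro c hc
    apply hmem
    · simp [hσ, abs_of_pos hd0]
    · simp only [hσ, norm_div, Complex.norm_real, Real.norm_eq_abs, abs_of_pos hd0]
      rw [div_le_iff₀ hd0]
      simpa using (mem_ball_zero_iff.1 hc).le
  have hσs : ContDiff ℝ (⊤ : ℕ∞) σ := by
    simp only [hσ, div_eq_mul_inv]
    fun_prop
  set al : ℂ → ℂ := fun c => (Φ (σ c)).1 / d with hal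
  have hals : ContDiffOn ℝ (⊤ : ℕ∞) al (Metric.ball 0 (d * d)) := by
    intro c hc
    have := ((hca _ (hσU c hc)).comp c hσs.contDiffAt).fst
    simp only [hal, div_eq_mul_inv]
    exact (this.mul contDiffAt_const).contDiffWithinAt
  have hdd : 0 < d * d := by positivity
  have hal0 : al 0 ≠ 0 := by
    intro h0
    have h1 : (Φ ((d:ℂ), 0)).1 = 0 := by
      simpa [hal, hσ, hdc] using h0
    have h2 : (Φ ((d:ℂ), 0)).2 * d = 0 := by
      have t1 : Tendsto (fun u : ℂ => (Φ (u, 0)).2 * u) (𝓝[≠] 0) (𝓝 ((Φ (0, 0)).2 * 0)) := by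
        have : ContinuousAt (fun u : ℂ => (Φ (u, 0)).2 * u) 0 := by
          have c1 : ContinuousAt Φ ((fun u : ℂ => (u, (0:ℂ))) 0) := (hca _ hU0).continuousAt
          have c2 : ContinuousAt (fun u : ℂ => (u, (0:ℂ))) 0 := by fun_prop
          exact (ContinuousAt.comp (f := fun u : ℂ => (u, (0:ℂ))) c1 c2).snd.mul continuousAt_id
        exact this.tendsto.mono_left nhdsWithin_le_nhds
      rw [mul_zero] at t1
      have t2 : Tendsto (fun u : ℂ => (Φ (u, 0)).2 * u) (𝓝[≠] 0) (𝓝 ((Φ ((d:ℂ), 0)).2 * d)) := by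
        apply tendsto_const_nhds.congr'
        filter_upwards [self_mem_nhdsWithin,
          mem_nhdsWithin_of_mem_nhds (Metric.closedBall_mem_nhds (0:ℂ) hd0)] with u hu1 hu2
        have := (hsec (u, 0) (by simpa using hu2) (by simpa using hd0.le) hu1).2
        simpa using this.symm
      exact tendsto_nhds_unique t2 t1
    have h3 : (Φ ((d:ℂ), 0)).2 = 0 := by simpa [hdc] using h2
    have h4 : Φ ((d:ℂ), 0) = Φ 0 := by rw [h00]; exact Prod.ext h1 h3
    have h5 := hinj (hmem _ (by simp [abs_of_pos hd0]) (by simpa using hd0.le)) hU0 h4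
    exact hdc (congrArg Prod.fst h5)
  have halc : ContinuousAt al 0 :=
    (hals.contDiffAt (Metric.ball_mem_nhds _ hdd)).continuousAt
  obtain ⟨r, hr0, hr⟩ : ∃ r > 0, ∀ c ∈ Metric.ball (0:ℂ) r,
      c ∈ Metric.ball (0:ℂ) (d * d) ∧ al c / al 0 ∈ Complex.slitPlane := by
    have h1 : ∀ᶠ c in 𝓝 (0:ℂ), al c / al 0 ∈ Complex.slitPlane := by
      apply (halc.div_const (al 0)).eventually_mem
      rw [div_self hal0]
      exact Complex.isOpen_slitPlane.mem_nhds Complex.one_mem_slitPlane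
    obtain ⟨r, h, h'⟩ := Metric.mem_nhds_iff.1
      (Filter.inter_mem (Metric.ball_mem_nhds (0:ℂ) hdd) h1)
    exact ⟨r, h, fun c hc => h' hc⟩
  have haln : ∀ c ∈ Metric.ball (0:ℂ) r, al c ≠ 0 := by
    intro c hc h
    have := (hr c hc).2
    simp [h] at this
  set lam : ℂ → ℂ := fun c => Complex.log (al c / al 0) with hlam
  have hexp : ∀ c ∈ Metric.ball (0:ℂ) r, al 0 * Complex.exp (lam c) = al c := by
    intro c hc
    simp only [hlam]
    rw [Complex.exp_log (div_ne_zero (haln c hc) hal0)]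
    field_simp
  refine ⟨al 0, lam, r, d, hal0, hr0, hd0, ?_, ?_, ?_⟩
  · intro c hc
    have h1 := (hals.contDiffAt (Metric.isOpen_ball.mem_nhds (hr c hc).1))
    have h2 : ContDiffAt ℝ (⊤ : ℕ∞) (fun c => al c / al 0) c := by
      simp only [div_eq_mul_inv]
      exact h1.mul contDiffAt_const
    have h3 : ContDiffAt ℝ (⊤ : ℕ∞) Complex.log (al c / al 0) :=
      (Complex.contDiffAt_log (hr c hc).2).restrict_scalars ℝ
    exact (h3.comp c h2).contDiffWithinAt
  · intro c hc
    have hU' := hσU c (hr c hc).1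
    have hσd : HasFDerivAt σ (fderiv ℝ σ c) c := (hσs.differentiable (by simp) c).hasFDerivAt
    have hσv : ∀ h, fderiv ℝ σ c h = (0, h / d) := by
      intro h
      have : HasFDerivAt σ ((0 : ℂ →L[ℝ] ℂ).prod
          ((d⁻¹ : ℝ) • ContinuousLinearMap.id ℝ ℂ)) c := by
        refine (hasFDerivAt_const (d : ℂ) c).prodMk ?_
        refine (((d⁻¹ : ℝ) • ContinuousLinearMap.id ℝ ℂ).hasFDerivAt).congr_of_eventuallyEq ?_
        refine Filter.Eventually.of_forall fun x => ?_
        simp [div_eq_mul_inv, mul_comm]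
      rw [this.fderiv]
      simp [div_eq_mul_inv, mul_comm]
    have hΦd := ((hca _ hU').differentiableAt (by simp)).hasFDerivAt.comp c hσd
    have hald := (hals.contDiffAt
      (Metric.isOpen_ball.mem_nhds (hr c hc).1)).differentiableAt (by simp) |>.hasFDerivAt
    set L := fderiv ℝ Φ (σ c) with hL
    set S := fderiv ℝ σ c with hS
    have hom := hs _ hU' (S 1) (S Complex.I)
    rw [← hL] at hom
    have hX := hΦd.fst
    have hY := hΦd.snd
    have hXY := hX.mul hY
    have hXY' : HasFDerivAt (fun c : ℂ => c) (ContinuousLinearMap.id ℝ ℂ) c := hasFDerivAt_id c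
    have hev : (fun y => ((Φ ∘ σ) y).1 * ((Φ ∘ σ) y).2) =ᶠ[𝓝 c] fun c : ℂ => c := by
      filter_upwards [Metric.isOpen_ball.mem_nhds (hr c hc).1] with y hy
      simp only [Function.comp]
      rw [hq _ (hσU y hy)]
      simp only [hσ]; field_simp
    have hprod := fun h => DFunLike.congr_fun (hXY.unique (hXY'.congr_of_eventuallyEq hev)) h
    have hal' : HasFDerivAt al ((d⁻¹ : ℝ) • ((ContinuousLinearMap.fst ℝ ℂ ℂ).comp (L.comp S))) c := by
      refine (hX.const_smul (d⁻¹ : ℝ)).congr_of_eventuallyEq ?_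
      refine Filter.Eventually.of_forall fun x => ?_
      simp [hal, div_eq_mul_inv, mul_comm]
    have hdiv := hal'.mul_const (al 0)⁻¹
    simp only [← div_eq_mul_inv] at hdiv
    have hlam' : HasFDerivAt lam _ c :=
      HasFDerivAt.comp (g := Complex.log) (f := fun y => al y / al 0) c
        (Complex.hasStrictFDerivAt_log_real (hr c hc).2).hasFDerivAt hdiv
    rw [hlam'.fderiv]
    have hXc : (Φ (σ c)).1 = d * al c := by simp only [hal]; field_simp
    have p1 := hprod 1
    have pI := hprod Complex.I
    have halc0 := haln c hc
    simp [hXc] at p1 pI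
    have hom' : ((L (S 1)).2 * (L (S Complex.I)).1 - (L (S 1)).1 * (L (S Complex.I)).2).re = 0 := by
      have e0 : om (S 1) (S Complex.I) = 0 := by rw [hσv, hσv]; simp [om]
      rw [← e0, ← hom, om]
    rw [← hom']
    congr 1
    simp only [ContinuousLinearMap.comp_apply, smul_apply,
      one_apply_eq_self, ContinuousLinearMap.coe_fst', smul_eq_mul,
      Complex.real_smul, Complex.ofReal_inv]
    field_simp
    linear_combination (L (S 1)).1 * pI - (L (S Complex.I)).1 * p1
  · intro p hp hc
    have hp1 : ‖p.1‖ < d := (norm_fst_le p).trans_lt hp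
    have hp2 : ‖p.2‖ < d := (norm_snd_le p).trans_lt hp
    have key : ∀ p : ℂ × ℂ, ‖p.1‖ ≤ d → ‖p.2‖ ≤ d → p.1 * p.2 ∈ Metric.ball (0:ℂ) r → p.1 ≠ 0 →
        Φ p = (al (p.1 * p.2) * p.1, (al (p.1 * p.2))⁻¹ * p.2) := by
      intro p h1 h2 hc hne
      have e1 := (hsec p h1 h2 hne).1
      have e2 := hq p (hmem p h1 h2)
      have e3 : (Φ p).1 = al (p.1 * p.2) * p.1 := e1
      have := haln _ hc
      refine Prod.ext e3 ?_
      simp only []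
      rw [e3] at e2
      field_simp
      apply mul_left_cancel₀ hne
      linear_combination e2
    have full : Φ p = (al (p.1 * p.2) * p.1, (al (p.1 * p.2))⁻¹ * p.2) := by
      by_cases hne : p.1 = 0
      · obtain ⟨u, v⟩ := p
        simp only at hne hp1 hp2 hc ⊢
        subst hne
        have t1 : Tendsto (fun u : ℂ => Φ (u, v)) (𝓝[≠] 0) (𝓝 (Φ (0, v))) := by
          have : ContinuousAt (fun u : ℂ => Φ (u, v)) 0 := by
            have c1 : ContinuousAt Φ ((fun u : ℂ => (u, v)) 0) :=
              (hca _ (hmem _ hp1.le hp2.le)).continuousAt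
            have c2 : ContinuousAt (fun u : ℂ => (u, v)) 0 := by fun_prop
            exact ContinuousAt.comp (f := fun u : ℂ => (u, v)) c1 c2
          exact this.tendsto.mono_left nhdsWithin_le_nhds
        have c3 : ContinuousAt (fun u : ℂ => u * v) 0 := by fun_prop
        have t2 : Tendsto (fun u : ℂ => (al (u * v) * u, (al (u * v))⁻¹ * v)) (𝓝[≠] 0)
            (𝓝 (al (0 * v) * 0, (al (0 * v))⁻¹ * v)) := by
          have : ContinuousAt (fun u : ℂ => (al (u * v) * u, (al (u * v))⁻¹ * v)) 0 := by
            have c4 : ContinuousAt (fun u : ℂ => al (u * v)) 0 :=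
              ContinuousAt.comp (g := al) (f := fun u : ℂ => u * v) (by simpa using halc) c3
            exact (c4.mul continuousAt_id).prodMk
              ((c4.inv₀ (by simpa using hal0)).mul continuousAt_const)
          exact this.tendsto.mono_left nhdsWithin_le_nhds
        refine tendsto_nhds_unique_of_eventuallyEq t1 t2 ?_
        filter_upwards [self_mem_nhdsWithin,
          mem_nhdsWithin_of_mem_nhds (Metric.closedBall_mem_nhds (0:ℂ) hd0),
          mem_nhdsWithin_of_mem_nhds (c3.eventually_mem (Metric.isOpen_ball.mem_nhds hc))]
          with u hu1 hu2 hu3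
        exact key (u, v) (by simpa using hu2) hp2.le hu3 hu1
      · exact key p hp1.le hp2.le hc hne
    rw [full, ← hexp _ hc, Complex.exp_neg, mul_inv]
    simp [mul_assoc]

lemma primitive {lam : ℂ → ℂ} {r : ℝ} (hl : ContDiffOn ℝ (⊤ : ℕ∞) lam (Metric.ball 0 r))
    (hcl : ∀ c ∈ Metric.ball (0:ℂ) r,
        (fderiv ℝ lam c Complex.I - Complex.I * fderiv ℝ lam c 1).re = 0) :
    ∃ (G : ℂ → ℝ) (G' : ℂ → ℂ →L[ℝ] ℝ), ContDiffOn ℝ (⊤ : ℕ∞) G (Metric.ball 0 r) ∧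
      (∀ c ∈ Metric.ball (0:ℂ) r, HasFDerivAt G (G' c) c) ∧
      ∀ c h, G' c h = (lam c * h).re := by
  set B : ℂ →L[ℝ] ℂ →L[ℝ] ℝ :=
    (ContinuousLinearMap.compL ℝ ℂ ℂ ℝ Complex.reCLM).comp (ContinuousLinearMap.mul ℝ ℂ) with hB
  have hBa : ∀ a h, B a h = (a * h).re := fun a h => by simp [hB]
  have hW : ContDiffOn ℝ (⊤ : ℕ∞) (fun c => B (lam c)) (Metric.ball 0 r) :=
    B.contDiff.comp_contDiffOn hl
  have hb : IsOpen (Metric.ball (0:ℂ) r) := Metric.isOpen_ball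
  obtain ⟨G, hG⟩ := (convex_ball (0:ℂ) r).exists_forall_hasFDerivAt_of_fderiv_symmetric hb
    (ω := fun c => B (lam c)) (hW.differentiableOn (by simp)) (by
      intro c hc x y
      have h1 : HasFDerivAt lam (fderiv ℝ lam c) c :=
        ((hl.contDiffAt (hb.mem_nhds hc)).differentiableAt (by simp)).hasFDerivAt
      have h2 : HasFDerivAt (fun c => B (lam c)) _ c := B.hasFDerivAt.comp c h1
      rw [h2.fderiv]
      simp only [ContinuousLinearMap.comp_apply, hBa]
      have h3 := hcl c hc
      have hx : ∀ x : ℂ, fderiv ℝ lam c x =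
          x.re * fderiv ℝ lam c 1 + x.im * fderiv ℝ lam c Complex.I := by
        intro x
        conv_lhs => rw [show x = x.re • (1:ℂ) + x.im • Complex.I by
          simp [Complex.re_add_im]]
        rw [map_add, map_smul, map_smul]
        simp
      rw [hx x, hx y]
      simp at h3 ⊢
      linear_combination (x.im * y.re - y.im * x.re) * h3)
  refine ⟨G, fun c => B (lam c), ?_, hG, fun c h => hBa _ _⟩
  refine (contDiffOn_infty_iff_fderiv_of_isOpen hb).2
    ⟨fun c hc => (hG c hc).differentiableAt.differentiableWithinAt, ?_⟩
  exact hW.congr fun c hc => (hG c hc).fderiv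

/-- Complex coordinates. -/
def TL : (ℂ × ℂ) ≃ₗ[ℝ] E4 where
  toFun p := ![p.1.re, p.2.re, -p.1.im, p.2.im]
  invFun p := (⟨p 0, -p 2⟩, ⟨p 1, p 3⟩)
  map_add' a b := by
    ext i; fin_cases i <;> simp; ring
  map_smul' a b := by
    ext i; fin_cases i <;> simp
  left_inv p := by simp
  right_inv p := by
    ext i; fin_cases i <;> simp

/-- Complex coordinates, continuous version. -/
def T : (ℂ × ℂ) ≃L[ℝ] E4 := TL.toContinuousLinearEquiv

/-- Complex coordinate on the base. -/
def SL : E2 →ₗ[ℝ] ℂ where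
  toFun y := ⟨y 0, y 1⟩
  map_add' a b := by apply Complex.ext <;> simp
  map_smul' a b := by apply Complex.ext <;> simp

lemma T_apply (p : ℂ × ℂ) : T p = ![p.1.re, p.2.re, -p.1.im, p.2.im] := rfl
lemma Tsymm_apply (p : E4) : T.symm p = (⟨p 0, -p 2⟩, ⟨p 1, p 3⟩) := rfl
lemma SL_apply (y : E2) : SL y = ⟨y 0, y 1⟩ := rfl

lemma om_T (a b : ℂ × ℂ) : omega0 (T a) (T b) = om a b := by
  simp [omega0, om, T_apply]; ring

lemma SL_q (p : E4) : SL (qmap p) = (T.symm p).1 * (T.symm p).2 := by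
  apply Complex.ext <;> simp [SL_apply, Tsymm_apply, qmap, q1, q2] <;> ring

lemma SL_inj : Function.Injective SL := by
  intro a b h
  rw [SL_apply, SL_apply, Complex.mk.injEq] at h
  ext i; fin_cases i
  · exact h.1
  · exact h.2

lemma hamVF_eq (G : ℂ → ℝ) (G' : ℂ →L[ℝ] ℝ) (l : ℂ) (hl : ∀ h, G' h = (l * h).re) (p : ℂ × ℂ)
    (hG : HasFDerivAt G G' (p.1 * p.2)) :
    HamVF (fun x : E4 => G (SL (qmap x))) (T p) = T (l * p.1, -(l * p.2)) := by
  have h0 : HasFDerivAt (fun x : E4 => T.symm x) (T.symm : E4 →L[ℝ] ℂ × ℂ) (T p) :=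
    T.symm.hasFDerivAt
  have h1 := h0.fst.mul h0.snd
  have hG1 : HasFDerivAt G G' ((T.symm (T p)).1 * (T.symm (T p)).2) := by simpa using hG
  have h2 := HasFDerivAt.comp (g := G) (g' := G')
      (f := fun x : E4 => (T.symm x).1 * (T.symm x).2) (T p) hG1 h1
  have hfun : (fun x : E4 => G (SL (qmap x))) = G ∘ fun x : E4 => (T.symm x).1 * (T.symm x).2 := by
    ext x; simp only [SL_q, Function.comp]
  have h3 : ∀ i, pd i (fun x : E4 => G (SL (qmap x))) (T p) =
      (l * (p.1 * (T.symm (Pi.single i 1)).2 + p.2 * (T.symm (Pi.single i 1)).1)).re := by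
    intro i
    rw [pd, hfun, h2.fderiv]
    simp [hl]
    ring
  unfold HamVF
  rw [h3, h3, h3, h3]
  simp only [T_apply, Tsymm_apply]
  ext i
  fin_cases i <;> simp [Pi.single_apply] <;> ring

/-- **(Miranda–Zung).** A local symplectomorphism `φ` of `(ℝ⁴,0)` with `q ∘ φ = q`
near the origin is the composition `A ∘ χ` of a linear symplectomorphism `A`
preserving `q` and the time-1 Hamiltonian flow `χ` of a smooth function of `(q₁,q₂)`. -/
theorem miranda_zung_decomposition
    (φ : E4 → E4) (U : Set E4) (hUopen : IsOpen U) (hU0 : (0:E4) ∈ U)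
    (hφ0 : φ 0 = 0) (hsm : ContDiffOn ℝ (⊤ : ℕ∞) φ U) (hinj : Set.InjOn φ U)
    (hsymp : ∀ p ∈ U, ∀ u v : E4,
      omega0 (fderiv ℝ φ p u) (fderiv ℝ φ p v) = omega0 u v)
    (hq : ∀ p ∈ U, qmap (φ p) = qmap p) :
    ∃ (A : E4 →ₗ[ℝ] E4) (g : E2 → ℝ) (ψ : ℝ → E4 → E4) (V : Set E4) (W : Set E2),
      -- `A` is a linear symplectomorphism preserving `q`
      (∀ u v : E4, omega0 (A u) (A v) = omega0 u v) ∧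
      (∀ p : E4, qmap (A p) = qmap p) ∧
      -- `g` is a smooth function of two variables near the origin
      IsOpen W ∧ (0:E2) ∈ W ∧ ContDiffOn ℝ (⊤ : ℕ∞) g W ∧
      -- `ψ` is the Hamiltonian flow of `g(q₁,q₂)`, and `φ = A ∘ (time-1 flow)`
      IsOpen V ∧ (0:E4) ∈ V ∧
      (∀ p ∈ V, ψ 0 p = p) ∧
      (∀ p ∈ V, ∀ t ∈ Set.Icc (0:ℝ) 1,
        HasDerivAt (fun τ : ℝ => ψ τ p)
          (HamVF (fun x : E4 => g (qmap x)) (ψ t p)) t) ∧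
      (∀ p ∈ V, φ p = A (ψ 1 p)) := by
  set Φ : ℂ × ℂ → ℂ × ℂ := fun z => T.symm (φ (T z)) with hΦ
  have hφΦ : ∀ p, φ p = T (Φ (T.symm p)) := by intro p; simp [hΦ]
  have hU' : IsOpen (T ⁻¹' U) := hUopen.preimage T.continuous
  have hfd : ∀ z ∈ T ⁻¹' U, ∀ a, fderiv ℝ Φ z a = T.symm (fderiv ℝ φ (T z) (T a)) := by
    intro z hz a
    have h1 : HasFDerivAt φ (fderiv ℝ φ (T z)) (T z) :=
      ((hsm.contDiffAt (hUopen.mem_nhds hz)).differentiableAt (by simp)).hasFDerivAt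
    have h2 : HasFDerivAt Φ _ z := T.symm.hasFDerivAt.comp z (h1.comp z T.hasFDerivAt)
    rw [h2.fderiv]
    rfl
  obtain ⟨a, lam, r, d, ha, hr, hd, hlam, hcl, hform⟩ := complex_form (Φ := Φ) (U := T ⁻¹' U) hU'
    (by simpa using hU0) (by simp [hΦ, hφ0])
    (T.symm.contDiff.comp_contDiffOn (hsm.comp T.contDiff.contDiffOn (fun z hz => hz)))
    (fun x hx y hy h => T.injective (hinj hx hy (T.symm.injective h)))
    (by
      intro z hz b c
      rw [hfd z hz, hfd z hz, ← om_T, T.apply_symm_apply, T.apply_symm_apply, hsymp _ hz, om_T])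
    (by
      intro z hz
      have := congrArg SL (hq _ hz)
      rw [SL_q, SL_q, T.symm_apply_apply] at this
      exact this)
  obtain ⟨G, G', hGs, hGd, hG'⟩ := primitive hlam hcl
  have hSc : Continuous SL := SL.continuous_of_finiteDimensional
  have hSs : ContDiff ℝ (⊤ : ℕ∞) SL := SL.toContinuousLinearMap.contDiff
  have hb : IsOpen (Metric.ball (0:ℂ) r) := Metric.isOpen_ball
  let D : (ℂ × ℂ) →ₗ[ℝ] (ℂ × ℂ) :=
    { toFun := fun z => (a * z.1, a⁻¹ * z.2)
      map_add' := fun x y => by simp [mul_add]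
      map_smul' := fun c x => by simp [mul_left_comm] }
  have hD : ∀ z, D z = (a * z.1, a⁻¹ * z.2) := fun z => rfl
  let A : E4 →ₗ[ℝ] E4 := TL.toLinearMap ∘ₗ D ∘ₗ TL.symm.toLinearMap
  have hA : ∀ p, A p = T (D (T.symm p)) := fun p => rfl
  refine ⟨A, fun y => G (SL y), fun t p =>
      T (Complex.exp (t * lam (SL (qmap p))) * (T.symm p).1,
        Complex.exp (-(t * lam (SL (qmap p)))) * (T.symm p).2),
    {p | ‖T.symm p‖ < d ∧ (T.symm p).1 * (T.symm p).2 ∈ Metric.ball (0:ℂ) r},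
    SL ⁻¹' Metric.ball 0 r, ?_, ?_, ?_, ?_, ?_, ?_, ?_, ?_, ?_, ?_⟩
  · intro u v
    rw [hA, hA, om_T, ← T.apply_symm_apply u, ← T.apply_symm_apply v, om_T]
    simp only [T.symm_apply_apply, om, hD]
    congr 1
    field_simp
  · intro p
    apply SL_inj
    rw [SL_q, SL_q, hA, T.symm_apply_apply, hD]
    field_simp
  · exact hb.preimage hSc
  · simp [hr]
  · exact hGs.comp hSs.contDiffOn (fun y hy => hy)
  · refine (isOpen_lt (T.symm.continuous.norm) continuous_const).inter (hb.preimage ?_)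
    exact (T.symm.continuous.fst).mul T.symm.continuous.snd
  · simp [hr, hd]
  · intro p _
    simp
  · rintro p ⟨_, hp⟩ t _
    rw [← SL_q] at hp
    have hGp := hGd _ hp
    beta_reduce
    generalize hl : lam (SL (qmap p)) = l
    have hinv : Complex.exp (t * l) * (T.symm p).1 * (Complex.exp (-(t * l)) * (T.symm p).2)
        = SL (qmap p) := by
      rw [SL_q, mul_mul_mul_comm, ← Complex.exp_add]
      simp
    rw [hamVF_eq G (G' (SL (qmap p))) l (fun h => by rw [hG', hl]) _ (by rw [hinv]; exact hGp)]
    have ht : HasDerivAt (fun t : ℝ => (t : ℂ) * l) l t := by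
      simpa using (Complex.ofRealCLM.hasDerivAt (x := t)).mul_const l
    have e1 := (ht.cexp).mul_const (T.symm p).1
    have e2 := (ht.neg.cexp).mul_const (T.symm p).2
    have e3 := T.hasFDerivAt.comp_hasDerivAt t (e1.prodMk e2)
    refine e3.congr_deriv ?_
    refine congrArg T ?_
    ext1 <;> simp <;> ring
  · rintro p ⟨hp1, hp2⟩
    rw [hφΦ, hform _ hp1 hp2, hA, T.symm_apply_apply, hD, SL_q]
    simp
end
end
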